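/- arXiv:1506.02174 — 2 statements merged into one kernel-verified Lean document; each statement's English description precedes it below -/
import Mathlib

section
/- Assume ε(𝒵_τ) ≥ ℓ(𝒵_τ) + log|𝒵_τ| for all τ ∈ 𝒯 and that W is sub-Gaussian with parameter ρ. Fix τ* ∈ 𝒯, Z* ∈ 𝒵_{τ*} and Q* ∈ ℝ^{ℓ(𝒵_{τ*})}, and for constants C₁ > 1 and C₂ > 0 set ε*(𝒵_τ) = C₁ε(𝒵_τ) + C₂‖𝒳_{Z*}(Q*) − θ*‖² and ε*(𝒵_{τ*}) = C₁ε(𝒵_{τ*}) + C₂‖𝒳_{Z*}(Q*) − θ*‖². For Z ∈ 𝒵_τ define the events E_Z = {|⟨W, 𝒳_Z(Q) − 𝒳_{Z*}(Q*)⟩| ≤ √(ε*(𝒵_τ)) · ‖𝒳_Z(Q) − 𝒳_{Z*}(Q*)‖ for all Q ∈ ℝ^{ℓ(𝒵_τ)}} and F_Z = {|⟨W, 𝒳_Z(Q) − 𝒳_{Z*}(Q*)⟩| ≤ √(ε*(𝒵_{τ*})) · ‖𝒳_Z(Q) − 𝒳_{Z*}(Q*)‖ for all Q ∈ ℝ^{ℓ(𝒵_τ)}}.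 Then P(E_Z^c) ≤ 2 exp(−(ρC₁/16 − 5)ε(𝒵_τ) − ρC₂‖𝒳_{Z*}(Q*) − θ*‖²/16) and P(F_Z^c) ≤ 2 exp(5ℓ(𝒵_τ) − ρC₁ε(𝒵_{τ*})/16 − ρC₂‖𝒳_{Z*}(Q*) − θ*‖²/16). -/
open MeasureTheory Real Matrix
open scoped ENNReal Classical

/-- Euclidean norm of a finitely-indexed real vector. -/
noncomputable def enr {ι : Type*} [Fintype ι] (v : ι → ℝ) : ℝ :=
  Real.sqrt (∑ i, v i ^ 2)

/-- Euclidean inner product. -/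
noncomputable def ipr {ι : Type*} [Fintype ι] (u v : ι → ℝ) : ℝ :=
  ∑ i, u i * v i

/-- Sub-Gaussian condition: `P(|⟨W,K⟩| > t) ≤ exp(-ρt²/2)` for every unit vector `K`. -/
def subG {ι Ω : Type*} [Fintype ι] [MeasurableSpace Ω] (P : Measure Ω) (ρ : ℝ)
    (W : Ω → ι → ℝ) : Prop :=
  ∀ K : ι → ℝ, enr K = 1 → ∀ t : ℝ, 0 < t →
    P {ω | t < |ipr (W ω) K|} ≤ ENNReal.ofReal (Real.exp (-ρ * t ^ 2 / 2))

/-!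
Let `U` be the range of `𝒳_Z` and `b = 𝒳_{Z*}(Q*)`. For `u ∈ U`, the vector `u - b` is the
difference of `v = u - proj_U b ∈ U` and `w = b - proj_U b ∈ Uᗮ`, so that
`‖v‖ + ‖w‖ ≤ √2 ‖u - b‖`, and it suffices to control `⟨W, w⟩` and the functional `⟨W, ·⟩` on `U`.
The norm of that functional is at most twice its maximum over a `1/2`-net of the unit sphere of
`U`, and a volume argument gives such a net with at most `5 ^ dim U` points. Hence the event
`∃ u ∈ U, |⟨W, u - b⟩| > √r ‖u - b‖` is covered by `5 ^ dim U + 1 ≤ 2 exp (5 dim U)` sub-Gaussian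
tails at level `t = √r / (2√2)`, each of probability at most `exp (-ρ t² / 2) = exp (-ρ r / 16)`.
-/

open Metric Module
open scoped NNReal RealInnerProductSpace

section Net

theorem encard_le_of_forall_finset_card_le {α : Type*} {s : Set α} {n : ℕ}
    (h : ∀ F : Finset α, ↑F ⊆ s → F.card ≤ n) : s.encard ≤ n := by
  by_contra! hlt
  obtain ⟨F, hFs, hF⟩ := Set.exists_subset_encard_eq (Order.add_one_le_of_lt hlt)
  lift F to Finset α using Set.finite_of_encard_eq_coe (k := n + 1) (mod_cast hF)
  rw [Set.encard_coe_eq_coe_finsetCard] at hF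
  have hcard : F.card = n + 1 := mod_cast hF
  have hcard_le : F.card ≤ n := h F hFs
  omega

theorem card_le_five_pow_finrank_of_isSeparated {E : Type*} [NormedAddCommGroup E]
    [NormedSpace ℝ E] [FiniteDimensional ℝ E] {ε : ℝ≥0} (hε : 0 < ε) {x : E} {F : Finset E}
    (hFx : (F : Set E) ⊆ closedBall x (2 * ε)) (hF : IsSeparated ε (F : Set E)) :
    F.card ≤ 5 ^ finrank ℝ E := by
  have hε_real : (0 : ℝ) < ε := hε
  let rescale : E → E := fun c ↦ (ε : ℝ)⁻¹ • (c - x)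
  have rescale_injective : rescale.Injective := fun c d h ↦ by simpa [rescale, hε.ne'] using h
  rw [← Finset.card_image_of_injective F rescale_injective]
  refine Besicovitch.card_le_of_separated _ (Finset.forall_mem_image.2 fun c hc ↦ ?_)
    (Finset.forall_mem_image.2 fun c hc ↦ Finset.forall_mem_image.2 fun d hd hcd ↦ ?_)
  · have hcx : dist c x ≤ 2 * ε := hFx hc
    rwa [norm_smul, norm_inv, NNReal.norm_eq, ← dist_eq_norm, inv_mul_le_iff₀' hε_real]
  · have hsep : (ε : ℝ) < dist c d := by
      have : (ε : ℝ≥0∞) < edist c d := hF hc hd (ne_of_apply_ne rescale hcd)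
      rwa [edist_nndist, ENNReal.coe_lt_coe, ← NNReal.coe_lt_coe, coe_nndist] at this
    rw [← smul_sub, sub_sub_sub_cancel_right, norm_smul, norm_inv, NNReal.norm_eq,
      ← dist_eq_norm, le_inv_mul_iff₀ hε_real, mul_one]
    exact hsep.le

theorem packingNumber_le_five_pow_finrank {E : Type*} [NormedAddCommGroup E] [NormedSpace ℝ E]
    [FiniteDimensional ℝ E] {ε : ℝ≥0} (hε : 0 < ε) {x : E} {A : Set E}
    (hA : A ⊆ closedBall x (2 * ε)) : packingNumber ε A ≤ (5 ^ finrank ℝ E : ℕ) :=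
  iSup₂_le fun _ hCA ↦ iSup_le fun hC ↦ encard_le_of_forall_finset_card_le fun _ hFC ↦
    card_le_five_pow_finrank_of_isSeparated hε (hFC.trans (hCA.trans hA)) (hC.subset hFC)

theorem exists_finset_isCover_sphere (E : Type*) [NormedAddCommGroup E] [NormedSpace ℝ E]
    [FiniteDimensional ℝ E] :
    ∃ S : Finset E, ↑S ⊆ sphere (0 : E) 1 ∧ IsCover (1 / 2) (sphere (0 : E) 1) ↑S ∧
      S.card ≤ 5 ^ finrank ℝ E := by
  have sphere_subset : sphere (0 : E) 1 ⊆ closedBall 0 (2 * (1 / 2 : ℝ≥0)) := by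
    simpa using sphere_subset_closedBall (x := (0 : E)) (ε := 1)
  have hcov : coveringNumber (1 / 2) (sphere (0 : E) 1) ≤ (5 ^ finrank ℝ E : ℕ) :=
    (coveringNumber_le_packingNumber _ _).trans
      (packingNumber_le_five_pow_finrank (by positivity) sphere_subset)
  obtain ⟨S, hS_sphere, hS_finite, hS_cover, hS_card⟩ :=
    exists_set_encard_eq_coveringNumber (ne_top_of_le_ne_top (ENat.natCast_ne_top _) hcov)
  lift S to Finset E using hS_finite
  rw [← hS_card, Set.encard_coe_eq_coe_finsetCard] at hcov
  exact ⟨S, hS_sphere, hS_cover, mod_cast hcov⟩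

theorem opNorm_le_div_of_isCover_sphere {𝕜 E F : Type*} [RCLike 𝕜] [SeminormedAddCommGroup E]
    [NormedSpace 𝕜 E] [SeminormedAddCommGroup F] [NormedSpace 𝕜 F] {ε : ℝ≥0} (hε : ε < 1)
    {S : Set E} (hS : IsCover ε (sphere 0 1) S) (L : E →L[𝕜] F) {m : ℝ} (hm : 0 ≤ m)
    (hL : ∀ c ∈ S, ‖L c‖ ≤ m) : ‖L‖ ≤ m / (1 - ε) := by
  have self_bound : ‖L‖ ≤ m + ‖L‖ * ε := by
    refine L.opNorm_le_of_unit_norm (by positivity) fun x hx ↦ ?_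
    obtain ⟨c, hcS, hxc⟩ : ∃ c ∈ S, ‖x - c‖ ≤ ε := by
      simpa [dist_eq_norm] using hS.subset_iUnion_closedBall (mem_sphere_zero_iff_norm.2 hx)
    calc ‖L x‖ = ‖L c + L (x - c)‖ := by rw [← map_add, add_sub_cancel]
      _ ≤ ‖L c‖ + ‖L (x - c)‖ := norm_add_le _ _
      _ ≤ m + ‖L‖ * ε := add_le_add (hL c hcS) (L.le_opNorm_of_le hxc)
  rw [le_div_iff₀ (sub_pos.2 (mod_cast hε))]
  linarith

end Net

section OrthogonalSplitting

variable {E : Type*} [NormedAddCommGroup E] [InnerProductSpace ℝ E]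

theorem norm_add_norm_le_sqrt_two_mul_norm_sub {v w : E} (h : ⟪v, w⟫ = 0) :
    ‖v‖ + ‖w‖ ≤ √2 * ‖v - w‖ := by
  refine le_of_sq_le_sq ?_ (by positivity)
  rw [mul_pow, sq_sqrt zero_le_two, sq ‖v - w‖,
    norm_sub_sq_eq_norm_sq_add_norm_sq_real h, ← sq, ← sq]
  exact add_sq_le

theorem abs_inner_sub_le_of_starProjection {U : Submodule ℝ E} [U.HasOrthogonalProjection]
    {x b : E} {m : ℝ} (hm : 0 ≤ m) (hU : ∀ v ∈ U, |⟪x, v⟫| ≤ m * ‖v‖)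
    (hb : |⟪x, b - U.starProjection b⟫| ≤ m * ‖b - U.starProjection b‖) {u : E} (hu : u ∈ U) :
    |⟪x, u - b⟫| ≤ √2 * m * ‖u - b‖ := by
  set v := u - U.starProjection b
  set w := b - U.starProjection b
  have hv : v ∈ U := U.sub_mem hu (U.starProjection_apply_mem b)
  have hvw : ⟪v, w⟫ = 0 := U.sub_starProjection_mem_orthogonal b v hv
  have hub : u - b = v - w := (sub_sub_sub_cancel_right u b _).symm
  calc |⟪x, u - b⟫| = |⟪x, v⟫ - ⟪x, w⟫| := by rw [hub, inner_sub_right]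
    _ ≤ |⟪x, v⟫| + |⟪x, w⟫| := abs_sub _ _
    _ ≤ m * ‖v‖ + m * ‖w‖ := add_le_add (hU v hv) hb
    _ = m * (‖v‖ + ‖w‖) := (mul_add _ _ _).symm
    _ ≤ m * (√2 * ‖v - w‖) := by gcongr; exact norm_add_norm_le_sqrt_two_mul_norm_sub hvw
    _ = √2 * m * ‖u - b‖ := by rw [hub]; ring

theorem abs_inner_le_of_isCover_sphere {U : Submodule ℝ E} {S : Set U}
    (hS_sphere : S ⊆ sphere 0 1) (hS : IsCover (1 / 2) (sphere 0 1) S) {x : E} {t : ℝ}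
    (ht : 0 ≤ t) (hx : ∀ c ∈ S, |⟪x, (c : E)⟫| ≤ t * ‖(c : E)‖) {v : E} (hv : v ∈ U) :
    |⟪x, v⟫| ≤ 2 * t * ‖v‖ := by
  let L : U →L[ℝ] ℝ := (innerSL ℝ x).comp U.subtypeL
  have hL : ∀ c ∈ S, ‖L c‖ ≤ t := fun c hc ↦ by
    have hc_norm : ‖(c : E)‖ = 1 := mem_sphere_zero_iff_norm.1 (hS_sphere hc)
    simpa [L, hc_norm] using hx c hc
  have hL_norm : ‖L‖ ≤ 2 * t :=
    (opNorm_le_div_of_isCover_sphere (by norm_num) hS L ht hL).trans_eq (by norm_num; ring)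
  exact L.le_of_opNorm_le hL_norm ⟨v, hv⟩

theorem measure_not_forall_abs_inner_sub_le {Ω : Type*} [MeasurableSpace Ω] {P : Measure Ω}
    {W : Ω → E} {t : ℝ} (ht : 0 ≤ t) {p : ℝ≥0∞}
    (hW : ∀ K : E, P {ω | t * ‖K‖ < |⟪W ω, K⟫|} ≤ p)
    (U : Submodule ℝ E) [FiniteDimensional ℝ U] (b : E) :
    P {ω | ¬ ∀ u ∈ U, |⟪W ω, u - b⟫| ≤ √2 * (2 * t) * ‖u - b‖} ≤
      (5 ^ finrank ℝ U + 1) * p := by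
  obtain ⟨S, hS_sphere, hS_cover, hS_card⟩ := exists_finset_isCover_sphere U
  set w := b - U.starProjection b
  let bad : E → Set Ω := fun K ↦ {ω | t * ‖K‖ < |⟪W ω, K⟫|}
  have subset_bad : {ω | ¬ ∀ u ∈ U, |⟪W ω, u - b⟫| ≤ √2 * (2 * t) * ‖u - b‖} ⊆
      (⋃ c ∈ S, bad c) ∪ bad w := by
    intro ω hω
    contrapose! hω
    simp only [bad, Set.mem_union, Set.mem_iUnion, Set.mem_ofPred_eq, not_or, not_exists,
      not_lt] at hω
    obtain ⟨hS_good, hw_good⟩ := hω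
    have hU : ∀ v ∈ U, |⟪W ω, v⟫| ≤ 2 * t * ‖v‖ := fun v hv ↦
      abs_inner_le_of_isCover_sphere hS_sphere hS_cover ht hS_good hv
    have hw : |⟪W ω, w⟫| ≤ 2 * t * ‖w‖ := hw_good.trans (by gcongr; linarith)
    simpa using fun u hu ↦ abs_inner_sub_le_of_starProjection (by positivity) hU hw hu
  calc _ ≤ P ((⋃ c ∈ S, bad c) ∪ bad w) := measure_mono subset_bad
    _ ≤ P (⋃ c ∈ S, bad c) + P (bad w) := measure_union_le _ _
    _ ≤ ∑ c ∈ S, P (bad c) + P (bad w) := by gcongr; exact measure_biUnion_finset_le _ _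
    _ ≤ ∑ _c ∈ S, p + p := add_le_add (Finset.sum_le_sum fun c _ ↦ hW c) (hW w)
    _ = (S.card + 1) * p := by rw [Finset.sum_const, nsmul_eq_mul, add_one_mul]
    _ ≤ (5 ^ finrank ℝ U + 1) * p := by gcongr; exact_mod_cast hS_card

end OrthogonalSplitting

section SubGaussian

theorem measure_lt_le_of_forall_gt {Ω : Type*} [MeasurableSpace Ω] {μ : Measure Ω} {α : Type*}
    [LinearOrder α] [DenselyOrdered α] [NoMaxOrder α] [TopologicalSpace α] [OrderTopology α]
    [FirstCountableTopology α] {f : Ω → α} {g : α → ℝ≥0∞} {t : α}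
    (hg : ContinuousWithinAt g (Set.Ioi t) t) (h : ∀ s > t, μ {ω | s < f ω} ≤ g s) :
    μ {ω | t < f ω} ≤ g t := by
  obtain ⟨s, hs_anti, hs_gt, hs_tendsto⟩ := exists_seq_strictAnti_tendsto t
  have hs_union : {ω | t < f ω} = ⋃ n, {ω | s n < f ω} := by
    ext ω
    simp only [Set.mem_ofPred_eq, Set.mem_iUnion]
    exact ⟨fun hω ↦ (hs_tendsto.eventually_lt_const hω).exists, fun ⟨n, hn⟩ ↦ (hs_gt n).trans hn⟩
  have hs_mono : Monotone fun n ↦ {ω | s n < f ω} :=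
    fun _ _ hmn _ hω ↦ (hs_anti.antitone hmn).trans_lt hω
  rw [hs_union]
  exact le_of_tendsto_of_tendsto' (tendsto_measure_iUnion_atTop hs_mono)
    (hg.tendsto.comp (tendsto_nhdsWithin_of_tendsto_nhds_of_eventually_within _ hs_tendsto
      (.of_forall hs_gt))) fun n ↦ h (s n) (hs_gt n)

variable {ι : Type*} [Fintype ι]

theorem enr_eq_norm_toLp (v : ι → ℝ) : enr v = ‖WithLp.toLp 2 v‖ := by
  simp [enr, EuclideanSpace.norm_eq]

theorem ipr_eq_inner_toLp (u v : ι → ℝ) : ipr u v = ⟪WithLp.toLp 2 u, WithLp.toLp 2 v⟫ := by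
  simp [ipr, PiLp.inner_apply, mul_comm]

theorem five_pow_add_one_le {k d : ℕ} (h : k ≤ d) : (5 : ℝ) ^ k + 1 ≤ 2 * exp (5 * d) := by
  have five_le : (5 : ℝ) ≤ exp 5 := by linarith [add_one_le_exp (5 : ℝ)]
  have pow_le : (5 : ℝ) ^ k ≤ exp (5 * d) := calc
    (5 : ℝ) ^ k ≤ 5 ^ d := pow_le_pow_right₀ (by norm_num) h
    _ ≤ exp 5 ^ d := by gcongr
    _ = exp (5 * d) := by rw [← exp_nat_mul, mul_comm]
  linarith [one_le_exp (x := 5 * (d : ℝ)) (by positivity)]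

variable {Ω : Type*} [MeasurableSpace Ω] {P : Measure Ω} {ρ : ℝ} {W : Ω → ι → ℝ}

theorem subG.measure_mul_norm_lt_abs_inner_le (hW : subG P ρ W) (K : EuclideanSpace ℝ ι) {t : ℝ}
    (ht : 0 ≤ t) :
    P {ω | t * ‖K‖ < |⟪WithLp.toLp 2 (W ω), K⟫|} ≤ ENNReal.ofReal (exp (-ρ * t ^ 2 / 2)) := by
  rcases eq_or_ne K 0 with rfl | hK
  · simp
  have hK_pos : 0 < ‖K‖ := norm_pos_iff.2 hK
  have enr_eq_one : enr (‖K‖⁻¹ • K).ofLp = 1 := by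
    rw [enr_eq_norm_toLp, WithLp.toLp_ofLp, norm_smul, norm_inv, norm_norm,
      inv_mul_cancel₀ hK_pos.ne']
  have normalize (ω : Ω) : |⟪WithLp.toLp 2 (W ω), K⟫| / ‖K‖ =
      |ipr (W ω) (‖K‖⁻¹ • K).ofLp| := by
    rw [ipr_eq_inner_toLp, WithLp.toLp_ofLp, inner_smul_right, abs_mul,
      abs_of_pos (inv_pos.2 hK_pos), inv_mul_eq_div]
  simp only [← lt_div_iff₀ hK_pos, normalize]
  -- The limit `s ↓ t` is what reaches `t = 0`, which `subG` excludes.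
  refine measure_lt_le_of_forall_gt (g := fun s ↦ ENNReal.ofReal (exp (-ρ * s ^ 2 / 2)))
    (ENNReal.continuous_ofReal.comp (by fun_prop)).continuousWithinAt fun s hs ↦
      hW _ enr_eq_one s (ht.trans_lt hs)

theorem subG.measure_not_forall_abs_ipr_mulVec_sub_le {κ : Type*} [Fintype κ] (hW : subG P ρ W)
    (X : Matrix ι κ ℝ) (b : ι → ℝ) {r : ℝ} (hr : 0 ≤ r) :
    P {ω | ¬ ∀ Q : κ → ℝ, |ipr (W ω) (X *ᵥ Q - b)| ≤ √r * enr (X *ᵥ Q - b)} ≤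
      ENNReal.ofReal (2 * exp (5 * Fintype.card κ - ρ * r / 16)) := by
  let L : (κ → ℝ) →ₗ[ℝ] EuclideanSpace ℝ ι := (WithLp.linearEquiv 2 ℝ (ι → ℝ)).symm ∘ₗ X.mulVecLin
  set t := √r / (√2 * 2)
  have hrt : √2 * (2 * t) = √r := by simp only [t]; field_simp
  have ht_sq : t ^ 2 = r / 8 := by
    rw [div_pow, mul_pow, sq_sqrt hr, sq_sqrt zero_le_two]; norm_num
  have hrank : finrank ℝ L.range ≤ Fintype.card κ := by
    simpa using L.finrank_range_le
  have ht : 0 ≤ t := by positivity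
  have net_bound := measure_not_forall_abs_inner_sub_le ht
    (fun K ↦ hW.measure_mul_norm_lt_abs_inner_le K ht) L.range (WithLp.toLp 2 b)
  rw [hrt] at net_bound
  have event_subset : {ω | ¬ ∀ Q : κ → ℝ, |ipr (W ω) (X *ᵥ Q - b)| ≤ √r * enr (X *ᵥ Q - b)} ⊆
      {ω | ¬ ∀ u ∈ L.range, |⟪WithLp.toLp 2 (W ω), u - WithLp.toLp 2 b⟫| ≤
        √r * ‖u - WithLp.toLp 2 b‖} := fun ω ↦ mt fun hall Q ↦ by
    rw [ipr_eq_inner_toLp, enr_eq_norm_toLp]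
    exact hall (L Q) ⟨Q, rfl⟩
  calc _ ≤ (5 ^ finrank ℝ L.range + 1) * ENNReal.ofReal (exp (-ρ * t ^ 2 / 2)) :=
        (measure_mono event_subset).trans net_bound
    _ = ENNReal.ofReal ((5 ^ finrank ℝ L.range + 1) * exp (-ρ * t ^ 2 / 2)) := by
        rw [ENNReal.ofReal_mul (by positivity)]
        norm_num [ENNReal.ofReal_add, ENNReal.ofReal_pow]
    _ ≤ ENNReal.ofReal (2 * exp (5 * Fintype.card κ) * exp (-ρ * t ^ 2 / 2)) := by
        gcongr
        exact five_pow_add_one_le hrank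
    _ = _ := by
        rw [mul_assoc, ← exp_add, ht_sq]
        ring_nf

end SubGaussian

theorem noise_lemma_general {ι T Ω : Type*} [Fintype ι] {Zty : T → Type*}
    (ℓ : T → ℕ) (X : (τ : T) → Zty τ → Matrix ι (Fin (ℓ τ)) ℝ)
    (ε : T → ℝ) (hε : ∀ τ, (ℓ τ : ℝ) ≤ ε τ)
    [MeasurableSpace Ω] {P : Measure Ω} {ρ : ℝ} {W : Ω → ι → ℝ} (hW : subG P ρ W)
    (θs : ι → ℝ) (τs : T) (Zs : Zty τs) (Qs : Fin (ℓ τs) → ℝ)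
    {C₁ C₂ : ℝ} (hC₁ : 0 ≤ C₁) (hC₂ : 0 ≤ C₂) (τ : T) (Z : Zty τ) :
    P {ω | ¬ ∀ Q : Fin (ℓ τ) → ℝ,
        |ipr (W ω) (X τ Z *ᵥ Q - X τs Zs *ᵥ Qs)| ≤
          √(C₁ * ε τ + C₂ * enr (X τs Zs *ᵥ Qs - θs) ^ 2) *
            enr (X τ Z *ᵥ Q - X τs Zs *ᵥ Qs)}
      ≤ ENNReal.ofReal (2 * exp (-(ρ * C₁ / 16 - 5) * ε τ
          - ρ * C₂ * enr (X τs Zs *ᵥ Qs - θs) ^ 2 / 16)) ∧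
    P {ω | ¬ ∀ Q : Fin (ℓ τ) → ℝ,
        |ipr (W ω) (X τ Z *ᵥ Q - X τs Zs *ᵥ Qs)| ≤
          √(C₁ * ε τs + C₂ * enr (X τs Zs *ᵥ Qs - θs) ^ 2) *
            enr (X τ Z *ᵥ Q - X τs Zs *ᵥ Qs)}
      ≤ ENNReal.ofReal (2 * exp (5 * (ℓ τ : ℝ) - ρ * C₁ * ε τs / 16
          - ρ * C₂ * enr (X τs Zs *ᵥ Qs - θs) ^ 2 / 16)) := by
  have radius_nonneg (σ : T) : 0 ≤ C₁ * ε σ + C₂ * enr (X τs Zs *ᵥ Qs - θs) ^ 2 := by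
    have hεσ : 0 ≤ ε σ := (Nat.cast_nonneg _).trans (hε σ)
    positivity
  have bound (σ : T) := hW.measure_not_forall_abs_ipr_mulVec_sub_le (X τ Z) (X τs Zs *ᵥ Qs)
    (radius_nonneg σ)
  simp only [Fintype.card_fin] at bound
  constructor
  · refine (bound τ).trans (ENNReal.ofReal_le_ofReal ?_)
    gcongr 2 * exp ?_
    linarith [hε τ]
  · refine (bound τs).trans_eq ?_
    ring_nf

/-- Lemma 1 (the events `E_Z` and `F_Z` hold with high probability).  Under the
complexity condition `ε(𝒵_τ) ≥ ℓ(𝒵_τ) + log |𝒵_τ|` and the sub-Gaussian condition on `W`,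
the complements of the events `E_Z` and `F_Z` have exponentially small probability. -/
theorem noise_lemma
    (N : ℕ) {T : Type*} [Fintype T] {Zty : T → Type*} [∀ τ, Fintype (Zty τ)]
    [∀ τ, Nonempty (Zty τ)]
    (ℓ : T → ℕ) (X : (τ : T) → Zty τ → Matrix (Fin N) (Fin (ℓ τ)) ℝ)
    (ε : T → ℝ)
    (hε : ∀ τ, (ℓ τ : ℝ) + Real.log (Fintype.card (Zty τ)) ≤ ε τ)
    {Ω : Type*} [MeasurableSpace Ω] (P : Measure Ω) [IsProbabilityMeasure P]
    (ρ : ℝ) (hρ : 0 < ρ) (W : Ω → Fin N → ℝ) (hW : subG P ρ W)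
    (θs : Fin N → ℝ) (τs : T) (Zs : Zty τs) (Qs : Fin (ℓ τs) → ℝ)
    (C₁ C₂ : ℝ) (hC₁ : 1 < C₁) (hC₂ : 0 < C₂)
    (τ : T) (Z : Zty τ) :
    P {ω | ¬ ∀ Q : Fin (ℓ τ) → ℝ,
        |ipr (W ω) fun i => (X τ Z).mulVec Q i - (X τs Zs).mulVec Qs i| ≤
          Real.sqrt (C₁ * ε τ + C₂ * (enr fun i => (X τs Zs).mulVec Qs i - θs i) ^ 2) *
            enr fun i => (X τ Z).mulVec Q i - (X τs Zs).mulVec Qs i}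
      ≤ ENNReal.ofReal (2 * Real.exp (-(ρ * C₁ / 16 - 5) * ε τ
          - ρ * C₂ * (enr fun i => (X τs Zs).mulVec Qs i - θs i) ^ 2 / 16)) ∧
    P {ω | ¬ ∀ Q : Fin (ℓ τ) → ℝ,
        |ipr (W ω) fun i => (X τ Z).mulVec Q i - (X τs Zs).mulVec Qs i| ≤
          Real.sqrt (C₁ * ε τs + C₂ * (enr fun i => (X τs Zs).mulVec Qs i - θs i) ^ 2) *
            enr fun i => (X τ Z).mulVec Q i - (X τs Zs).mulVec Qs i}
      ≤ ENNReal.ofReal (2 * Real.exp (5 * (ℓ τ : ℝ) - ρ * C₁ * ε τs / 16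
          - ρ * C₂ * (enr fun i => (X τs Zs).mulVec Qs i - θs i) ^ 2 / 16)) := by
  have hℓε (σ : T) : (ℓ σ : ℝ) ≤ ε σ :=
    (le_add_of_nonneg_right (log_natCast_nonneg _)).trans (hε σ)
  exact noise_lemma_general ℓ X ε hℓε hW θs τs Zs Qs (zero_le_one.trans hC₁.le) hC₂.le τ Z
end

section
/- (Theorem 1, model-complexity bound.) Assume ε(𝒵_τ) ≥ ℓ(𝒵_τ) + log|𝒵_τ| for all τ ∈ 𝒯, the counting condition |{τ : t−1 < ε(𝒵_τ) ≤ t}| ≤ t for all t ∈ ℕ, and that W = Y − θ* is sub-Gaussian with parameter ρ. Then for any θ* ∈ ℝ^N, any τ* ∈ 𝒯, any Z* ∈ 𝒵̄_{τ*}, any Q* ∈ ℝ^{ℓ(𝒵_{τ*})}, any constants λ, ρ > 0 and any sufficiently small constant δ ∈ (0,1), there exists a constant D_{λ,δ,ρ} > 0 depending only on λ, δ, ρ such that for every D > D_{λ,δ,ρ} there is a constant C' > 0 depending only on λ, δ, ρ, D with E Π( ε(𝒵_τ) > (1+δ)ε(𝒵_{τ*}) + δ‖𝒳_{Z*}(Q*)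 − θ*‖² | Y ) ≤ exp(−C'(ε(𝒵_{τ*}) + ‖𝒳_{Z*}(Q*) − θ*‖²)), where the expectation is over the distribution of W. -/
open MeasureTheory Real Matrix
open scoped ENNReal Classical

/-- Determinant of the Gram matrix `AᵀA`. -/
noncomputable def gramDet {N κ : Type*} [Fintype N] [Fintype κ] [DecidableEq κ]
    (A : Matrix N κ ℝ) : ℝ := (Aᵀ * A).det

/-- Generic posterior probability for a structured linear model.
`ι` indexes the models (structures), `κ i` the coordinates of the parameter of model `i`,
`A i` is the matrix of the linear operator `𝒳` of model `i`, `w i` the model-selection prior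
weight (with the Gamma-correction already cancelled against the Laplace normalizing constant),
`emb i` maps a parameter to the object the posterior statement is about, `Y` is the data,
`Sel` restricts the model index and `U` the embedded parameter. -/
noncomputable def gpostP {Θ N ι : Type*} [Fintype N] [Fintype ι]
    {κ : ι → Type*} [∀ i, Fintype (κ i)] [∀ i, DecidableEq (κ i)]
    (w : ι → ℝ) (A : (i : ι) → Matrix N (κ i) ℝ)
    (emb : (i : ι) → (κ i → ℝ) → Θ) (lam : ℝ) (Y : N → ℝ)
    (Sel : Set ι) (U : Set Θ) : ℝ :=
  (∑ i : ι, (if i ∈ Sel then w i else 0) * Real.sqrt (gramDet (A i)) *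
      (lam / Real.sqrt π) ^ Fintype.card (κ i) *
      ∫ Q in {Q : κ i → ℝ | emb i Q ∈ U},
        Real.exp (-(1/2) * (enr fun t => Y t - (A i).mulVec Q t) ^ 2
          - lam * enr ((A i).mulVec Q))) /
  (∑ i : ι, w i * Real.sqrt (gramDet (A i)) *
      (lam / Real.sqrt π) ^ Fintype.card (κ i) *
      ∫ Q : κ i → ℝ,
        Real.exp (-(1/2) * (enr fun t => Y t - (A i).mulVec Q t) ^ 2
          - lam * enr ((A i).mulVec Q)))

/-- The posterior distribution of the two-step model-selection prior in the structured
linear model: `A` restricts the structure index `τ` and `U` restricts the signal `𝒳_Z(Q)`.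
The model index is a pair `(τ, Z)` with `Z ∈ 𝒵̄_τ = {Z : det(𝒳_Zᵀ𝒳_Z) > 0}`; the prior
weight of `τ` is `exp(-D ε(𝒵_τ))` (after cancelling the Gamma-correction factor against
the normalizing constant of the elliptical Laplace distribution) and `Z` is uniform on
`𝒵̄_τ`. -/
noncomputable def framePost (N : ℕ) {T : Type*} [Fintype T] {Zty : T → Type*}
    [∀ τ, Fintype (Zty τ)] (ℓ : T → ℕ)
    (X : (τ : T) → Zty τ → Matrix (Fin N) (Fin (ℓ τ)) ℝ) (ε : T → ℝ) (D lam : ℝ)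
    (Y : Fin N → ℝ) (A : Set T) (U : Set (Fin N → ℝ)) : ℝ :=
  gpostP
    (fun i : Σ τ : T, Zty τ =>
      (if 0 < gramDet (X i.1 i.2) then 1 else 0) * Real.exp (-D * ε i.1) *
        ((Finset.univ.filter fun Z : Zty i.1 => 0 < gramDet (X i.1 Z)).card : ℝ)⁻¹)
    (fun i => X i.1 i.2) (fun i Q => (X i.1 i.2).mulVec Q) lam Y
    {i | i.1 ∈ A} U

/-!
The column space `S` of a structure carries the only information about it that matters: by the
area formula the factor `√det(𝒳ᵀ𝒳)` turns the integral over parameters into an integral of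
penalized likelihoods over `S`, the evidence of `S`. For a point `v` of the oracle space,
averaging the likelihood over `v + u` and `v - u` removes the linear term in `u` and bounds the
evidence of the oracle space below by the likelihood at `v`. The evidence of a competing space is
bounded above by completing the square, the noise entering only through its size on
`S ⊔ span {v}`, a space of dimension `ℓ(𝒵_τ) + 1`; a net argument shows that the squared size is
at most a multiple of `ε(𝒵_τ)` outside an event of probability `exp (-11 ε(𝒵_τ))`. For large `D`
the prior weight then reduces the posterior odds against the oracle to `exp (-11 ε(𝒵_τ))` too, and
the counting condition makes these terms summable.

Both bounds are useless when `ε(𝒵_τ) < 1 / 2`, as the constants in the exponents cannot be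
absorbed into `ε(𝒵_τ)`. But such a structure has dimension zero, hence the same evidence as the
oracle, and by the counting condition at most one of them is more complex than the oracle.
-/

open Module Submodule
open scoped InnerProductSpace NNReal

section AreaFormula

variable {E κ : Type*} [NormedAddCommGroup E] [InnerProductSpace ℝ E] [FiniteDimensional ℝ E]
  [MeasurableSpace E] [BorelSpace E] [Fintype κ]

theorem integral_comp_mulVec [DecidableEq κ] {F : Type*} [NormedAddCommGroup F] [NormedSpace ℝ F]
    {B : Matrix κ κ ℝ} (hB : B.det ≠ 0) (f : (κ → ℝ) → F) :
    |B.det| • ∫ Q, f (B *ᵥ Q) = ∫ y, f y := by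
  have hemb : MeasurableEmbedding (toLin' B) :=
    (LinearMap.equivOfDetNeZero (toLin' B) (by simpa using hB)).toContinuousLinearEquiv
      |>.toHomeomorph.measurableEmbedding
  have hmap := hemb.integral_map (μ := volume) f
  rw [Real.map_matrix_volume_pi_eq_smul_volume_pi hB, integral_smul_measure,
    ENNReal.toReal_ofReal (abs_nonneg _), abs_inv] at hmap
  simp only [toLin'_apply] at hmap
  rw [← hmap, smul_inv_smul₀ (abs_ne_zero.2 hB)]

theorem integral_comp_repr_symm (b : OrthonormalBasis κ ℝ E) (f : E → ℝ) :
    ∫ y : κ → ℝ, f (b.repr.symm (WithLp.toLp 2 y)) = ∫ x, f x := by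
  rw [← b.measurePreserving_repr_symm.integral_comp
    b.repr.symm.toHomeomorph.measurableEmbedding f]
  exact (EuclideanSpace.volume_preserving_symm_measurableEquiv_toLp κ).symm.integral_comp
    (MeasurableEquiv.toLp 2 (κ → ℝ)).measurableEmbedding fun y => f (b.repr.symm y)

variable [DecidableEq κ]

theorem sqrt_det_gram_mul_integral_sum_smul (b : OrthonormalBasis κ ℝ E) {v : κ → E}
    (hv : LinearIndependent ℝ v) (f : E → ℝ) :
    √(gram ℝ v).det * ∫ Q : κ → ℝ, f (∑ j, Q j • v j) = ∫ x, f x := by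
  let B : Matrix κ κ ℝ := of fun i j => b.repr (v j) i
  have hgram : (gram ℝ v).det = B.det ^ 2 := by
    rw [gram_eq_conjTranspose_mul b, det_mul, det_conjTranspose, star_trivial, sq]
  have hB : B.det ≠ 0 := by
    rw [← sq_eq_zero_iff.ne, ← hgram]
    exact det_gram_ne_zero_iff_linearIndependent.2 hv
  have hsum (Q : κ → ℝ) : ∑ j, Q j • v j = b.repr.symm (WithLp.toLp 2 (B *ᵥ Q)) := by
    rw [LinearIsometryEquiv.eq_symm_apply]
    ext i
    simp [B, mulVec, dotProduct, mul_comm]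
  simp_rw [hgram, sqrt_sq_eq_abs, hsum]
  rw [← integral_comp_repr_symm b, ← smul_eq_mul]
  exact integral_comp_mulVec hB fun y => f (b.repr.symm (WithLp.toLp 2 y))

theorem sqrt_det_gram_mul_integral_span {v : κ → E} (hv : LinearIndependent ℝ v) (f : E → ℝ) :
    √(gram ℝ v).det * ∫ Q : κ → ℝ, f (∑ j, Q j • v j) =
      ∫ x : span ℝ (Set.range v), f x := by
  let v' : κ → span ℝ (Set.range v) := fun j => ⟨v j, subset_span ⟨j, rfl⟩⟩
  have hgram : gram ℝ v' = gram ℝ v := rfl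
  let e : Fin (finrank ℝ (span ℝ (Set.range v))) ≃ κ :=
    Fintype.equivOfCardEq (by rw [Fintype.card_fin, finrank_span_eq_card hv])
  have hspan := sqrt_det_gram_mul_integral_sum_smul ((stdOrthonormalBasis ℝ _).reindex e)
    (v := v') (linearIndependent_span hv) fun x => f x
  simpa [hgram, v'] using hspan

end AreaFormula

section ColumnSpace

variable {N κ : Type*}

/-- The range of `A` as a subspace of Euclidean space: the signals `𝒳_Z(Q)` available to the
model with matrix `A`. -/
def columnSpace (A : Matrix N κ ℝ) : Submodule ℝ (EuclideanSpace ℝ N) :=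
  span ℝ (Set.range fun j => WithLp.toLp 2 (A.col j))

variable [Fintype κ]

theorem finrank_columnSpace_le (A : Matrix N κ ℝ) :
    finrank ℝ (columnSpace A) ≤ Fintype.card κ :=
  finrank_range_le_card _

theorem toLp_mulVec (A : Matrix N κ ℝ) (Q : κ → ℝ) :
    (WithLp.toLp 2 (A *ᵥ Q) : EuclideanSpace ℝ N) = ∑ j, Q j • WithLp.toLp 2 (A.col j) := by
  ext i
  simp [mulVec, dotProduct, mul_comm]

theorem toLp_mulVec_mem_columnSpace (A : Matrix N κ ℝ) (Q : κ → ℝ) :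
    WithLp.toLp 2 (A *ᵥ Q) ∈ columnSpace A := by
  rw [toLp_mulVec]
  exact sum_mem fun j _ => smul_mem _ _ (subset_span ⟨j, rfl⟩)

variable [Fintype N] [DecidableEq κ]

theorem gramDet_eq_det_gram (A : Matrix N κ ℝ) :
    gramDet A = (gram ℝ fun j => (WithLp.toLp 2 (A.col j) : EuclideanSpace ℝ N)).det := by
  rw [gramDet]
  congr 1
  ext i j
  simp [gram_apply, mul_apply, PiLp.inner_apply, mul_comm]

theorem linearIndependent_col_of_gramDet_pos {A : Matrix N κ ℝ}
    (hA : 0 < gramDet A) :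
    LinearIndependent ℝ fun j => (WithLp.toLp 2 (A.col j) : EuclideanSpace ℝ N) :=
  linearIndependent_of_det_gram_ne_zero (gramDet_eq_det_gram A ▸ hA.ne')

theorem finrank_columnSpace_of_gramDet_pos {A : Matrix N κ ℝ} (hA : 0 < gramDet A) :
    finrank ℝ (columnSpace A) = Fintype.card κ :=
  finrank_span_eq_card (linearIndependent_col_of_gramDet_pos hA)

theorem sqrt_gramDet_mul_integral_mulVec {A : Matrix N κ ℝ} (hA : 0 < gramDet A)
    (f : EuclideanSpace ℝ N → ℝ) :
    √(gramDet A) * ∫ Q, f (WithLp.toLp 2 (A *ᵥ Q)) = ∫ x : columnSpace A, f x := by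
  have hcol := linearIndependent_col_of_gramDet_pos hA
  have h := sqrt_det_gram_mul_integral_span hcol f
  rw [gramDet_eq_det_gram]
  simp only [toLp_mulVec]
  exact h

end ColumnSpace

section Evidence

variable {E : Type*} [NormedAddCommGroup E] {lam s : ℝ}

/-- The Gaussian likelihood of the signal `x` given the data `y`, times the unnormalised
elliptical Laplace prior density of `x`. -/
noncomputable def penalizedLikelihood (lam : ℝ) (y x : E) : ℝ :=
  exp (-(1 / 2) * ‖y - x‖ ^ 2 - lam * ‖x‖)

theorem penalizedLikelihood_pos (lam : ℝ) (y x : E) : 0 < penalizedLikelihood lam y x :=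
  exp_pos _

theorem continuous_penalizedLikelihood (lam : ℝ) (y : E) :
    Continuous (penalizedLikelihood lam y) := by
  unfold penalizedLikelihood
  fun_prop

variable [InnerProductSpace ℝ E]

theorem penalizedLikelihood_add_ge (hlam : 0 ≤ lam) (y v u : E) :
    penalizedLikelihood lam y v * exp (-(lam ^ 2 / 2)) * exp (-1 * ‖u‖ ^ 2) * exp ⟪y - v, u⟫_ℝ ≤
      penalizedLikelihood lam y (v + u) := by
  have hsq : ‖y - (v + u)‖ ^ 2 = ‖y - v‖ ^ 2 - 2 * ⟪y - v, u⟫_ℝ + ‖u‖ ^ 2 := by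
    rw [← sub_sub, norm_sub_sq_real]
  have hnorm : lam * ‖v + u‖ ≤ lam * (‖v‖ + ‖u‖) := by gcongr; exact norm_add_le _ _
  simp only [penalizedLikelihood, ← exp_add, exp_le_exp]
  linarith [sq_nonneg (lam - ‖u‖)]

/-- The linear terms at `v + u` and `v - u` cancel because `exp t + exp (-t) ≥ 2`. -/
theorem two_mul_penalizedLikelihood_le_add_sub (hlam : 0 ≤ lam) (y v u : E) :
    2 * (penalizedLikelihood lam y v * exp (-(lam ^ 2 / 2))) * exp (-1 * ‖u‖ ^ 2) ≤
      penalizedLikelihood lam y (v + u) + penalizedLikelihood lam y (v - u) := by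
  have hadd := penalizedLikelihood_add_ge hlam y v u
  have hsub := penalizedLikelihood_add_ge hlam y v (-u)
  rw [norm_neg, inner_neg_right, ← sub_eq_add_neg] at hsub
  have hcosh : 2 ≤ exp ⟪y - v, u⟫_ℝ + exp (-⟪y - v, u⟫_ℝ) := by
    linarith [add_one_le_exp ⟪y - v, u⟫_ℝ, add_one_le_exp (-⟪y - v, u⟫_ℝ)]
  calc _ = penalizedLikelihood lam y v * exp (-(lam ^ 2 / 2)) * exp (-1 * ‖u‖ ^ 2) * 2 := by ring
    _ ≤ penalizedLikelihood lam y v * exp (-(lam ^ 2 / 2)) * exp (-1 * ‖u‖ ^ 2) *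
        (exp ⟪y - v, u⟫_ℝ + exp (-⟪y - v, u⟫_ℝ)) := by
      gcongr
      exact mul_nonneg (mul_pos (penalizedLikelihood_pos _ _ _) (exp_pos _)).le (exp_pos _).le
    _ ≤ _ := by linarith

theorem penalizedLikelihood_le (hlam : 0 ≤ lam) {θ w v x : E}
    (hw : ⟪w, x - v⟫_ℝ ≤ s * ‖x - v‖) :
    penalizedLikelihood lam (θ + w) x ≤
      penalizedLikelihood lam (θ + w) v * exp (3 * s ^ 2 + 3 * ‖v - θ‖ ^ 2 + 3 * lam ^ 2) *
        exp (-(1 / 4) * ‖x - v‖ ^ 2) := by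
  have hsq : ‖θ + w - x‖ ^ 2 =
      ‖θ + w - v‖ ^ 2 - 2 * (⟪w, x - v⟫_ℝ - ⟪v - θ, x - v⟫_ℝ) + ‖x - v‖ ^ 2 := by
    rw [← inner_sub_left, show w - (v - θ) = θ + w - v by abel, ← norm_sub_sq_real,
      sub_sub_sub_cancel_right]
  have hbias : -⟪v - θ, x - v⟫_ℝ ≤ ‖v - θ‖ * ‖x - v‖ :=
    (neg_le_abs _).trans (abs_real_inner_le_norm _ _)
  have hnorm : lam * ‖v‖ ≤ lam * (‖x‖ + ‖x - v‖) := by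
    gcongr
    exact norm_le_norm_add_norm_sub _ _
  have hamgm : (s + ‖v - θ‖ + lam) * ‖x - v‖ ≤
      (s + ‖v - θ‖ + lam) ^ 2 + 1 / 4 * ‖x - v‖ ^ 2 := by
    linarith [sq_nonneg (s + ‖v - θ‖ + lam - 1 / 2 * ‖x - v‖)]
  have hcauchy : (s + ‖v - θ‖ + lam) ^ 2 ≤ 3 * s ^ 2 + 3 * ‖v - θ‖ ^ 2 + 3 * lam ^ 2 := by
    linarith [sq_nonneg (s - ‖v - θ‖), sq_nonneg (s - lam), sq_nonneg (‖v - θ‖ - lam)]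
  simp only [penalizedLikelihood, ← exp_add, exp_le_exp]
  linarith

variable [FiniteDimensional ℝ E] [MeasurableSpace E] [BorelSpace E]

theorem integrable_exp_neg_mul_sq_norm {b : ℝ} (hb : 0 < b) :
    Integrable fun x : E => exp (-b * ‖x‖ ^ 2) := by
  refine Integrable.of_integral_ne_zero ?_
  rw [GaussianFourier.integral_rexp_neg_mul_sq_norm hb]
  positivity

variable (E) in
theorem div_sqrt_pi_pow_mul_integral_gaussian (c : ℝ) {b : ℝ} (hb : 0 < b) :
    (c / √π) ^ finrank ℝ E * ∫ x : E, exp (-b * ‖x‖ ^ 2) = (c / √b) ^ finrank ℝ E := by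
  have hpow : (π / b) ^ (finrank ℝ E / 2 : ℝ) = √(π / b) ^ finrank ℝ E := by
    rw [div_eq_inv_mul (finrank ℝ E : ℝ), rpow_mul (by positivity), rpow_natCast, sqrt_eq_rpow,
      one_div]
  rw [GaussianFourier.integral_rexp_neg_mul_sq_norm hb, hpow, ← mul_pow, sqrt_div pi_pos.le]
  field_simp

theorem integrable_penalizedLikelihood (hlam : 0 ≤ lam) (y : E) (S : Submodule ℝ E) :
    Integrable fun x : S => penalizedLikelihood lam y x := by
  refine Integrable.mono' ((integrable_exp_neg_mul_sq_norm (b := 1 / 4) (by norm_num)).const_mul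
    (penalizedLikelihood lam y 0 * exp (3 * ‖y‖ ^ 2 + 3 * lam ^ 2)))
    ((continuous_penalizedLikelihood lam y).comp continuous_subtype_val).aestronglyMeasurable
    (.of_forall fun x => ?_)
  rw [norm_of_nonneg (penalizedLikelihood_pos _ _ _).le]
  simpa using penalizedLikelihood_le hlam (θ := 0) (v := 0) (x := (x : E)) (w := y)
    (by simpa using real_inner_le_norm y (x : E))

/-- The marginal likelihood of the data `y` under the elliptical Laplace prior on the subspace `S`,
with the normalising constant `(λ / √π) ^ dim S` of the framework. -/
noncomputable def evidence (lam : ℝ) (y : E) (S : Submodule ℝ E) : ℝ :=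
  (lam / √π) ^ finrank ℝ S * ∫ x : S, penalizedLikelihood lam y x

theorem evidence_nonneg (hlam : 0 ≤ lam) (y : E) (S : Submodule ℝ E) : 0 ≤ evidence lam y S :=
  mul_nonneg (by positivity) (integral_nonneg fun _ => (penalizedLikelihood_pos _ _ _).le)

theorem exp_neg_div_le_pow (hlam : 0 < lam) (n : ℕ) : exp (-(n / lam)) ≤ lam ^ n := by
  have hexp : exp (-(1 / lam)) ≤ lam := by
    rw [exp_neg]
    exact inv_le_of_inv_le₀ hlam (by linarith [add_one_le_exp (1 / lam), one_div lam])
  calc exp (-(n / lam)) = exp (-(1 / lam)) ^ n := by rw [← exp_nat_mul]; ring_nf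
    _ ≤ lam ^ n := by gcongr

theorem penalizedLikelihood_mul_exp_le_evidence (hlam : 0 < lam) (y : E) {S : Submodule ℝ E}
    {v : E} (hv : v ∈ S) :
    penalizedLikelihood lam y v * exp (-(finrank ℝ S / lam + lam ^ 2 / 2)) ≤
      evidence lam y S := by
  lift v to S using hv
  have hint := integrable_penalizedLikelihood hlam.le y S
  set p := fun x : S => penalizedLikelihood lam y x
  have hsymm : p v * exp (-(lam ^ 2 / 2)) * ∫ u : S, exp (-1 * ‖u‖ ^ 2) ≤ ∫ x, p x := by
    have hmono := integral_mono
      ((integrable_exp_neg_mul_sq_norm one_pos).const_mul (2 * (p v * exp (-(lam ^ 2 / 2)))))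
      ((hint.comp_add_left v).add (hint.comp_sub_left v))
      fun u : S => two_mul_penalizedLikelihood_le_add_sub hlam.le y v u
    simp only [integral_const_mul, Pi.add_apply] at hmono
    rw [integral_add (hint.comp_add_left v) (hint.comp_sub_left v),
      integral_add_left_eq_self p, integral_sub_left_eq_self p] at hmono
    linarith
  have hgauss := div_sqrt_pi_pow_mul_integral_gaussian S lam one_pos
  rw [sqrt_one, div_one] at hgauss
  calc p v * exp (-(finrank ℝ S / lam + lam ^ 2 / 2))
      = p v * exp (-(lam ^ 2 / 2)) * exp (-(finrank ℝ S / lam)) := by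
        rw [neg_add_rev, exp_add, mul_assoc]
    _ ≤ p v * exp (-(lam ^ 2 / 2)) * lam ^ finrank ℝ S := by
        gcongr
        · exact mul_nonneg (penalizedLikelihood_pos _ _ _).le (exp_pos _).le
        · exact exp_neg_div_le_pow hlam _
    _ = (lam / √π) ^ finrank ℝ S * (p v * exp (-(lam ^ 2 / 2)) * ∫ u : S, exp (-1 * ‖u‖ ^ 2)) := by
        rw [← hgauss]; ring
    _ ≤ evidence lam y S := mul_le_mul_of_nonneg_left hsymm (by positivity)

theorem evidence_le (hlam : 0 < lam) {θ w v : E} {S : Submodule ℝ E}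
    (hw : ∀ x ∈ S, ⟪w, x - v⟫_ℝ ≤ s * ‖x - v‖) :
    evidence lam (θ + w) S ≤ penalizedLikelihood lam (θ + w) v *
      exp (2 * lam * finrank ℝ S + 3 * s ^ 2 + 3 * ‖v - θ‖ ^ 2 + 3 * lam ^ 2) := by
  set q := S.orthogonalProjectionOnto v
  set K := penalizedLikelihood lam (θ + w) v *
    exp (3 * s ^ 2 + 3 * ‖v - θ‖ ^ 2 + 3 * lam ^ 2) with hK
  have hproj (x : S) : ‖x - q‖ ≤ ‖(x : E) - v‖ := by
    have h := S.norm_orthogonalProjectionOnto_apply_le ((x : E) - v)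
    rwa [map_sub, orthogonalProjectionOnto_mem_subspace_eq_self] at h
  have hpoint (x : S) : penalizedLikelihood lam (θ + w) x ≤ K * exp (-(1 / 4) * ‖x - q‖ ^ 2) := by
    refine (penalizedLikelihood_le hlam.le (hw x x.2)).trans ?_
    have := hproj x
    gcongr ?_ * exp ?_
    · exact mul_nonneg (penalizedLikelihood_pos _ _ _).le (exp_pos _).le
    · nlinarith [norm_nonneg (x - q)]
  have hgauss := integrable_exp_neg_mul_sq_norm (E := S) (b := 1 / 4) (by norm_num)
  have hint := integral_mono (integrable_penalizedLikelihood hlam.le (θ + w) S)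
    ((hgauss.comp_sub_right q).const_mul K) hpoint
  rw [integral_const_mul, integral_sub_right_eq_self fun x : S => exp (-(1 / 4) * ‖x‖ ^ 2)] at hint
  have hconst := div_sqrt_pi_pow_mul_integral_gaussian S lam (b := 1 / 4) (by norm_num)
  have hhalf : lam / √(1 / 4) = 2 * lam := by
    rw [show (1 / 4 : ℝ) = (1 / 2) ^ 2 by norm_num, sqrt_sq (by norm_num)]; ring
  have hpow : (2 * lam) ^ finrank ℝ S ≤ exp (2 * lam * finrank ℝ S) := by
    rw [mul_comm _ (finrank ℝ S : ℝ), exp_nat_mul]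
    gcongr
    linarith [add_one_le_exp (2 * lam)]
  calc evidence lam (θ + w) S
      ≤ (lam / √π) ^ finrank ℝ S * (K * ∫ x : S, exp (-(1 / 4) * ‖x‖ ^ 2)) :=
        mul_le_mul_of_nonneg_left hint (by positivity)
    _ = (2 * lam) ^ finrank ℝ S * K := by rw [← hhalf, ← hconst]; ring
    _ ≤ exp (2 * lam * finrank ℝ S) * K :=
        mul_le_mul_of_nonneg_right hpow
          (mul_nonneg (penalizedLikelihood_pos _ _ _).le (exp_pos _).le)
    _ = _ := by rw [hK, mul_left_comm, ← exp_add]; ring_nf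

theorem evidence_le_exp_mul_evidence (hlam : 0 < lam) {θ w v : E} {S S₀ : Submodule ℝ E}
    (hv : v ∈ S₀) (hw : ∀ x ∈ S, ⟪w, x - v⟫_ℝ ≤ s * ‖x - v‖) :
    evidence lam (θ + w) S ≤
      exp (2 * lam * finrank ℝ S + 3 * s ^ 2 + 3 * ‖v - θ‖ ^ 2 + 3 * lam ^ 2 +
        (finrank ℝ S₀ / lam + lam ^ 2 / 2)) * evidence lam (θ + w) S₀ := by
  have hlower := penalizedLikelihood_mul_exp_le_evidence hlam (θ + w) hv
  rw [exp_neg, ← div_eq_mul_inv, div_le_iff₀ (exp_pos _)] at hlower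
  refine (evidence_le hlam hw).trans
    ((mul_le_mul_of_nonneg_right hlower (exp_pos _).le).trans_eq ?_)
  rw [mul_assoc, ← exp_add]
  ring_nf

end Evidence

section Net

variable {E : Type*} [NormedAddCommGroup E]

theorem card_le_of_half_separated_sphere [NormedSpace ℝ E] [FiniteDimensional ℝ E] {t : Finset E}
    (hsphere : ∀ c ∈ t, ‖c‖ = 1) (hsep : ∀ c ∈ t, ∀ d ∈ t, c ≠ d → 1 / 2 ≤ ‖c - d‖) :
    t.card ≤ 5 ^ finrank ℝ E := by
  let double : E ↪ E := ⟨((2 : ℝ) • ·), smul_right_injective E two_ne_zero⟩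
  rw [← Finset.card_map double]
  refine Besicovitch.card_le_of_separated _ ?_ ?_
  · simp +contextual [double, norm_smul, hsphere]
  · simp only [Finset.forall_mem_map, double, Function.Embedding.coeFn_mk, ← smul_sub, norm_smul,
      norm_ofNat]
    intro c hc d hd hcd
    linarith [hsep c hc d hd fun h => hcd (h ▸ rfl)]

theorem packingNumber_half_sphere_le [NormedSpace ℝ E] [FiniteDimensional ℝ E] :
    Metric.packingNumber (1 / 2) (Metric.sphere (0 : E) 1) ≤ (5 ^ finrank ℝ E : ℕ) := by
  refine iSup_le fun C => iSup₂_le fun hC hsep => ?_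
  by_contra! hcard
  obtain ⟨t, htC, ht⟩ := Set.exists_subset_encard_eq (Order.add_one_le_of_lt hcard)
  lift t to Finset E using Set.finite_of_encard_eq_coe (k := 5 ^ finrank ℝ E + 1) ht
  have hle : t.card ≤ 5 ^ finrank ℝ E := by
    refine card_le_of_half_separated_sphere
      (fun c hc => mem_sphere_zero_iff_norm.1 (hC (htC hc))) fun c hc d hd hcd => ?_
    have h : (1 / 2 : ℝ≥0) < edist c d := hsep (htC hc) (htC hd) hcd
    rw [edist_nndist, ENNReal.coe_lt_coe, ← NNReal.coe_lt_coe, coe_nndist, dist_eq_norm] at h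
    simpa using h.le
  rw [Set.encard_coe_eq_coe_finsetCard] at ht
  norm_cast at ht
  omega

theorem exists_finset_half_net_sphere [NormedSpace ℝ E] [FiniteDimensional ℝ E] :
    ∃ F : Finset E, F.card ≤ 5 ^ finrank ℝ E ∧ (∀ c ∈ F, ‖c‖ = 1) ∧
      ∀ u : E, ‖u‖ = 1 → ∃ c ∈ F, ‖u - c‖ ≤ 1 / 2 := by
  have hpack := packingNumber_half_sphere_le (E := E)
  have hcov := (Metric.coveringNumber_le_packingNumber _ _).trans hpack
  have htop := ne_top_of_le_ne_top (ENat.natCast_ne_top _) hcov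
  have hfin : (Metric.minimalCover (1 / 2) (Metric.sphere (0 : E) 1)).Finite :=
    Metric.finite_minimalCover
  refine ⟨hfin.toFinset, ?_, fun c hc => ?_, fun u hu => ?_⟩
  · rw [← Metric.encard_minimalCover htop, hfin.encard_eq_coe_toFinset_card] at hcov
    exact_mod_cast hcov
  · exact mem_sphere_zero_iff_norm.1 (Metric.minimalCover_subset (hfin.mem_toFinset.1 hc))
  · obtain ⟨c, hc, huc⟩ := Metric.isCover_minimalCover htop (mem_sphere_zero_iff_norm.2 hu)
    refine ⟨c, hfin.mem_toFinset.2 hc, ?_⟩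
    have h : edist u c ≤ (1 / 2 : ℝ≥0) := huc
    rw [edist_nndist, ENNReal.coe_le_coe, ← NNReal.coe_le_coe, coe_nndist, dist_eq_norm] at h
    simpa using h

variable [InnerProductSpace ℝ E]

theorem norm_le_two_mul_of_half_net {F : Finset E}
    (hF : ∀ u : E, ‖u‖ = 1 → ∃ c ∈ F, ‖u - c‖ ≤ 1 / 2) {p : E} {r : ℝ} (hr : 0 ≤ r)
    (hp : ∀ c ∈ F, ⟪p, c⟫_ℝ ≤ r) : ‖p‖ ≤ 2 * r := by
  rcases eq_or_ne p 0 with rfl | hp0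
  · simpa using hr
  obtain ⟨c, hc, hpc⟩ := hF (‖p‖⁻¹ • p) (norm_smul_inv_norm hp0)
  have hself : ⟪p, ‖p‖⁻¹ • p⟫_ℝ = ‖p‖ := by
    rw [real_inner_smul_right, real_inner_self_eq_norm_sq]
    field_simp
  have herr : ⟪p, ‖p‖⁻¹ • p - c⟫_ℝ ≤ ‖p‖ * (1 / 2) :=
    (real_inner_le_norm _ _).trans (by gcongr)
  rw [inner_sub_right, hself] at herr
  linarith [hp c hc]

theorem real_inner_le_of_half_net (S : Submodule ℝ E) [S.HasOrthogonalProjection] {F : Finset S}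
    (hF : ∀ u : S, ‖u‖ = 1 → ∃ c ∈ F, ‖u - c‖ ≤ 1 / 2) {w : E} {r : ℝ} (hr : 0 ≤ r)
    (hw : ∀ c ∈ F, ⟪w, c⟫_ℝ ≤ r) {u : E} (hu : u ∈ S) : ⟪w, u⟫_ℝ ≤ 2 * r * ‖u‖ := by
  have hproj (c : S) : ⟪S.orthogonalProjectionOnto w, c⟫_ℝ = ⟪w, c⟫_ℝ :=
    inner_orthogonalProjectionOnto_eq_of_mem_right c w
  have hnorm : ‖S.orthogonalProjectionOnto w‖ ≤ 2 * r :=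
    norm_le_two_mul_of_half_net hF hr fun c hc => (hproj c).trans_le (hw c hc)
  calc ⟪w, u⟫_ℝ = ⟪S.orthogonalProjectionOnto w, ⟨u, hu⟩⟫_ℝ := (hproj ⟨u, hu⟩).symm
    _ ≤ ‖S.orthogonalProjectionOnto w‖ * ‖u‖ := real_inner_le_norm _ _
    _ ≤ 2 * r * ‖u‖ := by gcongr

end Net

section SubGaussian

theorem enr_eq_norm {ι : Type*} [Fintype ι] (v : ι → ℝ) :
    enr v = ‖(WithLp.toLp 2 v : EuclideanSpace ℝ ι)‖ := by
  simp [enr, EuclideanSpace.norm_eq]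

theorem ipr_eq_inner {ι : Type*} [Fintype ι] (u v : ι → ℝ) :
    ipr u v = ⟪(WithLp.toLp 2 u : EuclideanSpace ℝ ι), WithLp.toLp 2 v⟫_ℝ := by
  simp [ipr, PiLp.inner_apply, mul_comm]

variable {ι Ω : Type*} [Fintype ι] [MeasurableSpace Ω] {P : Measure Ω} {ρ : ℝ} {W : Ω → ι → ℝ}

theorem subG_measure_lt_inner_le (hW : subG P ρ W) {K : EuclideanSpace ℝ ι} (hK : ‖K‖ = 1)
    {t : ℝ} (ht : 0 < t) :
    P {ω | t < ⟪WithLp.toLp 2 (W ω), K⟫_ℝ} ≤ ENNReal.ofReal (exp (-ρ * t ^ 2 / 2)) := by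
  refine (measure_mono fun ω hω => ?_).trans (hW K.ofLp ((enr_eq_norm _).trans hK) t ht)
  rw [Set.mem_ofPred_eq, ipr_eq_inner]
  exact hω.trans_le (le_abs_self _)

theorem subG_measure_exists_mem_lt_inner_le (hW : subG P ρ W)
    (S : Submodule ℝ (EuclideanSpace ℝ ι)) {s : ℝ} (hs : 0 < s) :
    P {ω | ∃ u ∈ S, s * ‖u‖ < ⟪WithLp.toLp 2 (W ω), u⟫_ℝ} ≤
      ENNReal.ofReal (5 ^ finrank ℝ S * exp (-ρ * s ^ 2 / 8)) := by
  obtain ⟨F, hcard, hnorm, hnet⟩ := exists_finset_half_net_sphere (E := S)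
  have hsub : {ω | ∃ u ∈ S, s * ‖u‖ < ⟪WithLp.toLp 2 (W ω), u⟫_ℝ} ⊆
      ⋃ c ∈ F, {ω | s / 2 < ⟪WithLp.toLp 2 (W ω), (c : EuclideanSpace ℝ ι)⟫_ℝ} := by
    rintro ω ⟨u, hu, hlt⟩
    by_contra hω
    simp only [Set.mem_iUnion, Set.mem_ofPred_eq, not_exists, not_lt] at hω
    have hle := real_inner_le_of_half_net S hnet (half_pos hs).le hω hu
    rw [mul_div_cancel₀ _ two_ne_zero] at hle
    exact hlt.not_ge hle
  calc _ ≤ ∑ c ∈ F, P {ω | s / 2 < ⟪WithLp.toLp 2 (W ω), (c : EuclideanSpace ℝ ι)⟫_ℝ} :=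
        (measure_mono hsub).trans (measure_biUnion_finset_le _ _)
    _ ≤ ∑ _c ∈ F, ENNReal.ofReal (exp (-ρ * s ^ 2 / 8)) := by
        refine Finset.sum_le_sum fun c hc => ?_
        rw [show -ρ * s ^ 2 / 8 = -ρ * (s / 2) ^ 2 / 2 by ring]
        exact subG_measure_lt_inner_le hW (hnorm c hc) (half_pos hs)
    _ = ENNReal.ofReal (F.card * exp (-ρ * s ^ 2 / 8)) := by
        rw [Finset.sum_const, nsmul_eq_mul, ENNReal.ofReal_mul (by positivity),
          ENNReal.ofReal_natCast]
    _ ≤ _ := by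
        gcongr
        exact_mod_cast hcard

theorem five_pow_mul_exp_le {n k : ℕ} {e : ℝ} (hρ : 0 < ρ) (he : 1 / 2 ≤ e) (hk : k ≤ n + 1)
    (hn : n ≤ e) : 5 ^ k * exp (-ρ * √(136 / ρ * e) ^ 2 / 8) ≤ exp (-11 * e) := by
  have hfive : (5 : ℝ) ≤ exp 2 := by
    have : exp 2 = exp 1 ^ 2 := by rw [← exp_nat_mul]; norm_num
    rw [this]
    nlinarith [exp_one_gt_d9]
  have hk' : (k : ℝ) ≤ n + 1 := by exact_mod_cast hk
  have hsq : -ρ * √(136 / ρ * e) ^ 2 / 8 = -17 * e := by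
    rw [sq_sqrt (by positivity)]
    field_simp
    ring
  calc 5 ^ k * exp (-ρ * √(136 / ρ * e) ^ 2 / 8) ≤ exp 2 ^ k * exp (-17 * e) := by
        rw [hsq]; gcongr
    _ = exp (k * 2 + -17 * e) := by rw [exp_add, exp_nat_mul]
    _ ≤ exp (-11 * e) := exp_le_exp.2 (by linarith)

/-- The constant `136` makes `ρ s² / 8 = 17 e`, of which `6 e ≥ 2 (card κ + 1)` pays for the
`5 ^ (card κ + 1)` points of the net. -/
theorem subG_measure_exists_mem_columnSpace_sup_lt_inner_le {κ : Type*} [Fintype κ]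
    (hW : subG P ρ W) (hρ : 0 < ρ) (A : Matrix ι κ ℝ) {e : ℝ} (hκ : (Fintype.card κ : ℝ) ≤ e)
    (he : 1 / 2 ≤ e) (v : EuclideanSpace ℝ ι) :
    P {ω | ∃ u ∈ columnSpace A ⊔ span ℝ {v},
      √(136 / ρ * e) * ‖u‖ < ⟪WithLp.toLp 2 (W ω), u⟫_ℝ} ≤ ENNReal.ofReal (exp (-11 * e)) := by
  have hfinrank : finrank ℝ ↥(columnSpace A ⊔ span ℝ {v}) ≤ Fintype.card κ + 1 :=
    (finrank_add_le_finrank_add_finrank _ _).trans <|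
      add_le_add (finrank_columnSpace_le A) ((finrank_span_le_card _).trans_eq (by simp))
  exact (subG_measure_exists_mem_lt_inner_le hW _ (sqrt_pos.2 (by positivity))).trans
    (ENNReal.ofReal_le_ofReal (five_pow_mul_exp_le hρ he hfinrank hκ))

theorem integral_le_add_measureReal_of_le_of_notMem [IsProbabilityMeasure P] {f : Ω → ℝ} {c : ℝ}
    {B : Set Ω} (hf₀ : ∀ ω, 0 ≤ f ω) (hf₁ : ∀ ω, f ω ≤ 1) (hc : 0 ≤ c)
    (hfc : ∀ ω ∉ B, f ω ≤ c) : ∫ ω, f ω ∂P ≤ c + P.real B := by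
  have hB := measurableSet_toMeasurable P B
  have hind : Integrable ((toMeasurable P B).indicator (1 : Ω → ℝ)) P :=
    (integrable_const 1).indicator hB
  calc ∫ ω, f ω ∂P ≤ ∫ ω, (c + (toMeasurable P B).indicator 1 ω) ∂P := by
        refine integral_mono_of_nonneg (.of_forall hf₀) ((integrable_const c).add hind)
          (.of_forall fun ω => ?_)
        by_cases hω : ω ∈ toMeasurable P B
        · simpa [hω] using (hf₁ ω).trans (le_add_of_nonneg_left hc)
        · simpa [hω] using hfc ω fun hωB => hω (subset_toMeasurable P B hωB)
    _ = c + P.real B := by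
        rw [integral_add (integrable_const c) hind, integral_indicator_one hB]
        simp [Measure.real, measure_toMeasurable]

end SubGaussian

section Counting

/-- The counting condition on the complexities: at most `t` of them lie in `(t - 1, t]`. -/
def CountingCondition {T : Type*} [Fintype T] (ε : T → ℝ) : Prop :=
  ∀ t : ℕ, 0 < t → (Finset.univ.filter fun τ => (t : ℝ) - 1 < ε τ ∧ ε τ ≤ (t : ℝ)).card ≤ t

theorem exp_neg_three_le : exp (-3) ≤ 1 / 16 := by
  have hexp : exp 3 = exp 1 ^ 3 := by rw [← exp_nat_mul]; norm_num
  rw [exp_neg, inv_le_comm₀ (exp_pos 3) (by norm_num), hexp]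
  calc (1 / 16 : ℝ)⁻¹ ≤ 2.7 ^ 3 := by norm_num
    _ ≤ exp 1 ^ 3 := by gcongr; linarith [exp_one_gt_d9]

theorem sum_natCast_mul_pow_le {r : ℝ} (hr₀ : 0 ≤ r) (hr : r ≤ 1 / 16) (s : Finset ℕ) :
    ∑ t ∈ s, t * r ^ t ≤ 1 / 8 := by
  have hnorm : ‖r‖ < 1 := by rw [norm_of_nonneg hr₀]; linarith
  calc ∑ t ∈ s, t * r ^ t ≤ r / (1 - r) ^ 2 :=
        sum_le_hasSum s (fun t _ => by positivity) (hasSum_coe_mul_geometric_of_norm_lt_one hnorm)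
    _ ≤ 1 / 8 := by
        rw [div_le_iff₀ (by nlinarith)]
        nlinarith

variable {T : Type*} [Fintype T] {ε : T → ℝ}

theorem CountingCondition.sum_exp_neg_le (hcount : CountingCondition ε) {F : Finset T}
    (hF : ∀ τ ∈ F, 1 / 2 ≤ ε τ) : ∑ τ ∈ F, exp (-9 * ε τ) ≤ 1 / 8 := by
  have hceil : ∀ τ ∈ F, (⌈ε τ⌉₊ : ℝ) < ε τ + 1 := fun τ hτ =>
    Nat.ceil_lt_add_one (by linarith [hF τ hτ])
  have hfiber (t : ℕ) (ht : t ∈ F.image fun τ => ⌈ε τ⌉₊) :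
      (F.filter fun τ => ⌈ε τ⌉₊ = t).card ≤ t := by
    obtain ⟨τ₀, hτ₀, rfl⟩ := Finset.mem_image.1 ht
    refine (Finset.card_le_card fun τ hτ => ?_).trans
      (hcount _ (Nat.ceil_pos.2 (by linarith [hF τ₀ hτ₀])))
    obtain ⟨hτF, hτ⟩ := Finset.mem_filter.1 hτ
    rw [← hτ]
    exact Finset.mem_filter.2
      ⟨Finset.mem_univ τ, by linarith [hceil τ hτF], Nat.le_ceil (ε τ)⟩
  calc ∑ τ ∈ F, exp (-9 * ε τ) ≤ ∑ τ ∈ F, exp (-3) ^ ⌈ε τ⌉₊ := by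
        refine Finset.sum_le_sum fun τ hτ => ?_
        rw [← exp_nat_mul, exp_le_exp]
        linarith [hceil τ hτ, hF τ hτ]
    _ = ∑ t ∈ F.image fun τ => ⌈ε τ⌉₊, (F.filter fun τ => ⌈ε τ⌉₊ = t).card * exp (-3) ^ t := by
        simp_rw [← nsmul_eq_mul]
        exact Finset.sum_comp (fun t => exp (-3) ^ t) _
    _ ≤ ∑ t ∈ F.image fun τ => ⌈ε τ⌉₊, t * exp (-3) ^ t := by
        gcongr with t ht
        exact hfiber t ht
    _ ≤ 1 / 8 := sum_natCast_mul_pow_le (exp_pos _).le exp_neg_three_le _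

/-- Of the exponent `11 ε`, one `ε` pays for the cardinality of `Zty τ`, one for `exp (-x)` and the
remaining nine for the counting condition. -/
theorem CountingCondition.sum_sigma_exp_neg_le (hcount : CountingCondition ε) {Zty : T → Type*}
    [∀ τ, Fintype (Zty τ)] (hcard : ∀ τ, (Fintype.card (Zty τ) : ℝ) ≤ exp (ε τ))
    {s : Finset (Σ τ, Zty τ)} {x : ℝ} (hs : ∀ i ∈ s, 1 / 2 ≤ ε i.1 ∧ x ≤ ε i.1) :
    ∑ i ∈ s, exp (-11 * ε i.1) ≤ exp (-x) / 8 := by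
  have hF : ∀ τ ∈ s.image Sigma.fst, 1 / 2 ≤ ε τ ∧ x ≤ ε τ :=
    Finset.forall_mem_image.2 hs
  calc ∑ i ∈ s, exp (-11 * ε i.1)
      ≤ ∑ i ∈ (s.image Sigma.fst).sigma fun _ => Finset.univ, exp (-11 * ε i.1) :=
        Finset.sum_le_sum_of_subset_of_nonneg
          (fun i hi => Finset.mem_sigma.2 ⟨Finset.mem_image_of_mem _ hi, Finset.mem_univ _⟩)
          fun _ _ _ => (exp_pos _).le
    _ = ∑ τ ∈ s.image Sigma.fst, Fintype.card (Zty τ) * exp (-11 * ε τ) := by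
        simp [Finset.sum_sigma]
    _ ≤ ∑ τ ∈ s.image Sigma.fst, exp (-x) * exp (-9 * ε τ) := by
        refine Finset.sum_le_sum fun τ hτ => ?_
        calc _ ≤ exp (ε τ) * exp (-11 * ε τ) := by gcongr; exact hcard τ
          _ ≤ exp (-x) * exp (-9 * ε τ) := by
            rw [← exp_add, ← exp_add, exp_le_exp]
            linarith [(hF τ hτ).2]
    _ = exp (-x) * ∑ τ ∈ s.image Sigma.fst, exp (-9 * ε τ) := by rw [Finset.mul_sum]
    _ ≤ exp (-x) * (1 / 8) := by
        gcongr
        exact hcount.sum_exp_neg_le fun τ hτ => (hF τ hτ).1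
    _ = exp (-x) / 8 := by ring

end Counting

section Posterior

variable {N : ℕ} {T : Type*} {Zty : T → Type*} [∀ τ, Fintype (Zty τ)] {ℓ : T → ℕ}

/-- The prior weight of the model `(τ, Z)`, with the Laplace normalising constant left to
`evidence`; it vanishes outside `𝒵̄_τ`. -/
noncomputable def priorWeight (X : (τ : T) → Zty τ → Matrix (Fin N) (Fin (ℓ τ)) ℝ) (ε : T → ℝ)
    (D : ℝ) (i : Σ τ : T, Zty τ) : ℝ :=
  (if 0 < gramDet (X i.1 i.2) then 1 else 0) * exp (-D * ε i.1) *
    ((Finset.univ.filter fun Z : Zty i.1 => 0 < gramDet (X i.1 Z)).card : ℝ)⁻¹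

/-- The unnormalised posterior mass of the model `(τ, Z)`. -/
noncomputable def modelMass (X : (τ : T) → Zty τ → Matrix (Fin N) (Fin (ℓ τ)) ℝ) (ε : T → ℝ)
    (D lam : ℝ) (y : EuclideanSpace ℝ (Fin N)) (i : Σ τ : T, Zty τ) : ℝ :=
  priorWeight X ε D i * evidence lam y (columnSpace (X i.1 i.2))

variable {X : (τ : T) → Zty τ → Matrix (Fin N) (Fin (ℓ τ)) ℝ} {ε : T → ℝ} {D lam : ℝ}
  {i o : Σ τ : T, Zty τ}

theorem priorWeight_nonneg : 0 ≤ priorWeight X ε D i := by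
  unfold priorWeight
  split_ifs <;> positivity

theorem priorWeight_le_exp : priorWeight X ε D i ≤ exp (-D * ε i.1) := by
  refine (mul_le_of_le_one_right ?_ (Nat.cast_inv_le_one _)).trans
    (mul_le_of_le_one_left (exp_pos _).le ?_)
  · split_ifs <;> positivity
  · split_ifs <;> norm_num

theorem exp_mul_inv_card_le_priorWeight (ho : 0 < gramDet (X o.1 o.2)) :
    exp (-D * ε o.1) * (Fintype.card (Zty o.1) : ℝ)⁻¹ ≤ priorWeight X ε D o := by
  rw [priorWeight, if_pos ho, one_mul]
  gcongr
  · exact_mod_cast Finset.card_pos.2 ⟨o.2, Finset.mem_filter.2 ⟨Finset.mem_univ _, ho⟩⟩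
  · exact Finset.card_filter_le _ _

theorem modelMass_nonneg (hlam : 0 ≤ lam) (y : EuclideanSpace ℝ (Fin N)) :
    0 ≤ modelMass X ε D lam y i :=
  mul_nonneg priorWeight_nonneg (evidence_nonneg hlam _ _)

theorem priorWeight_mul_sqrt_gramDet_mul_integral (Y : Fin N → ℝ) :
    priorWeight X ε D i * √(gramDet (X i.1 i.2)) * (lam / √π) ^ Fintype.card (Fin (ℓ i.1)) *
        ∫ Q, exp (-(1 / 2) * (enr fun t => Y t - (X i.1 i.2 *ᵥ Q) t) ^ 2
          - lam * enr (X i.1 i.2 *ᵥ Q)) =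
      modelMass X ε D lam (WithLp.toLp 2 Y) i := by
  by_cases hi : 0 < gramDet (X i.1 i.2)
  · have harea := sqrt_gramDet_mul_integral_mulVec hi (penalizedLikelihood lam (WithLp.toLp 2 Y))
    rw [modelMass, evidence, ← harea, finrank_columnSpace_of_gramDet_pos hi]
    simp only [enr_eq_norm, penalizedLikelihood, ← WithLp.toLp_sub]
    simp only [Pi.sub_def]
    ring
  · simp [modelMass, priorWeight, hi]

theorem framePost_univ_eq [Fintype T] (Y : Fin N → ℝ) (A : Set T) :
    framePost N ℓ X ε D lam Y A Set.univ =
      (∑ i with i.1 ∈ A, modelMass X ε D lam (WithLp.toLp 2 Y) i) /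
        ∑ i, modelMass X ε D lam (WithLp.toLp 2 Y) i := by
  simp only [Finset.sum_filter, ← priorWeight_mul_sqrt_gramDet_mul_integral]
  simp only [framePost, gpostP, Set.mem_univ, Set.ofPred_true, Measure.restrict_univ]
  congr 1
  refine Finset.sum_congr rfl fun i _ => ?_
  by_cases hi : i.1 ∈ A
  · simp [hi, priorWeight]
  · simp [hi]

/-- The lower bound `D_{λ,δ,ρ}` for the penalty constant `D`. A model in the selected region has
`ε(𝒵_τ) + ‖v - θ‖² ≤ (1 + 1 / δ) (ε(𝒵_τ) - ε(𝒵_{τ*}))`, so the prior odds absorb the second factor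
times `ε(𝒵_τ) + ‖v - θ‖²`: the terms in `lam` and `ρ` come from the comparison of the evidences, and
`12` leaves `11 ε(𝒵_τ)` after the uniform prior on `Z` has been paid for. -/
noncomputable def complexityThreshold (lam ρ δ : ℝ) : ℝ :=
  (1 + 1 / δ) * (12 + 1 / lam + 2 * lam + 7 * lam ^ 2 + 408 / ρ)

theorem complexityThreshold_pos {ρ δ : ℝ} (hlam : 0 < lam) (hρ : 0 < ρ) (hδ : 0 < δ) :
    0 < complexityThreshold lam ρ δ := by
  unfold complexityThreshold
  positivity

theorem add_le_mul_sub_of_gap {δ e e₀ b : ℝ} (hδ : 0 < δ) (hgap : (1 + δ) * e₀ + δ * b ≤ e) :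
    e + b ≤ (1 + 1 / δ) * (e - e₀) := by
  have hscaled : δ * ((1 + 1 / δ) * (e - e₀)) = (1 + δ) * (e - e₀) := by field_simp; ring
  refine le_of_mul_le_mul_left ?_ hδ
  linarith

theorem exponent_le_of_gap {ρ δ e e₀ b n n₀ : ℝ} (hlam : 0 < lam) (hρ : 0 < ρ) (hδ : 0 < δ)
    (hD : complexityThreshold lam ρ δ < D) (hb : 0 ≤ b) (hn : n ≤ e) (hn₀ : n₀ ≤ e₀)
    (he₀ : 0 ≤ e₀) (he : 1 / 2 ≤ e) (hgap : (1 + δ) * e₀ + δ * b < e) :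
    -D * e + (2 * lam * n + 3 * (136 / ρ * e) + 3 * b + 3 * lam ^ 2 + (n₀ / lam + lam ^ 2 / 2)) ≤
      -11 * e + (-D * e₀ + -e₀) := by
  set K := 12 + 1 / lam + 2 * lam + 7 * lam ^ 2 + 408 / ρ with hK
  have hK₀ : 0 ≤ K := by positivity
  have hee₀ : e₀ ≤ e := by nlinarith [mul_nonneg hδ.le he₀, mul_nonneg hδ.le hb]
  have hpenalty : K * (e + b) ≤ D * (e - e₀) := by
    have hgap' := add_le_mul_sub_of_gap hδ hgap.le
    calc K * (e + b) ≤ K * ((1 + 1 / δ) * (e - e₀)) :=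
          mul_le_mul_of_nonneg_left hgap' hK₀
      _ = complexityThreshold lam ρ δ * (e - e₀) := by rw [complexityThreshold, ← hK]; ring
      _ ≤ D * (e - e₀) := by gcongr
  have hdim : n₀ / lam ≤ 1 / lam * e := by
    rw [div_mul_eq_mul_div, one_mul]
    gcongr
    linarith
  have hdim' : 2 * lam * n ≤ 2 * lam * e := by gcongr
  have hsq : 3 * lam ^ 2 + lam ^ 2 / 2 ≤ 7 * lam ^ 2 * e := by nlinarith [sq_nonneg lam]
  have hKb : 12 * b ≤ K * b := by
    gcongr
    rw [hK]
    have : 0 ≤ 1 / lam + 2 * lam + 7 * lam ^ 2 + 408 / ρ := by positivity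
    linarith
  have hKe : K * e = 12 * e + 1 / lam * e + 2 * lam * e + 7 * lam ^ 2 * e + 3 * (136 / ρ * e) := by
    rw [hK]; ring
  linarith

variable {ρ δ : ℝ} {θ w v : EuclideanSpace ℝ (Fin N)}

theorem modelMass_le_exp_mul_modelMass (hlam : 0 < lam) (hρ : 0 < ρ) (hδ : 0 < δ)
    (hD : complexityThreshold lam ρ δ < D) (hℓ : ∀ τ, (ℓ τ : ℝ) ≤ ε τ)
    (hcard : ∀ τ, (Fintype.card (Zty τ) : ℝ) ≤ exp (ε τ)) (ho : 0 < gramDet (X o.1 o.2))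
    (hv : v ∈ columnSpace (X o.1 o.2)) (hi : 1 / 2 ≤ ε i.1)
    (hgap : (1 + δ) * ε o.1 + δ * ‖v - θ‖ ^ 2 < ε i.1)
    (hw : ∀ x ∈ columnSpace (X i.1 i.2), ⟪w, x - v⟫_ℝ ≤ √(136 / ρ * ε i.1) * ‖x - v‖) :
    modelMass X ε D lam (θ + w) i ≤ exp (-11 * ε i.1) * modelMass X ε D lam (θ + w) o := by
  have hfinrank (j : Σ τ : T, Zty τ) : (finrank ℝ (columnSpace (X j.1 j.2)) : ℝ) ≤ ε j.1 :=
    (Nat.cast_le.2 ((finrank_columnSpace_le _).trans_eq (Fintype.card_fin _))).trans (hℓ j.1)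
  have hexponent := exponent_le_of_gap hlam hρ hδ hD (sq_nonneg ‖v - θ‖) (hfinrank i)
    (hfinrank o) ((Nat.cast_nonneg _).trans (hℓ o.1)) hi hgap
  have hevidence := evidence_le_exp_mul_evidence hlam (θ := θ) hv hw
  rw [sq_sqrt (by positivity)] at hevidence
  have hinv : exp (-ε o.1) ≤ (Fintype.card (Zty o.1) : ℝ)⁻¹ := by
    rw [exp_neg]
    have : 0 < (Fintype.card (Zty o.1) : ℝ) := Nat.cast_pos.2 (Fintype.card_pos_iff.2 ⟨o.2⟩)
    gcongr
    exact hcard o.1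
  have hev := evidence_nonneg hlam.le (θ + w) (columnSpace (X o.1 o.2))
  calc modelMass X ε D lam (θ + w) i
      ≤ exp (-D * ε i.1) * evidence lam (θ + w) (columnSpace (X i.1 i.2)) :=
        mul_le_mul_of_nonneg_right priorWeight_le_exp (evidence_nonneg hlam.le _ _)
    _ ≤ exp (-D * ε i.1) * _ := mul_le_mul_of_nonneg_left hevidence (exp_pos _).le
    _ ≤ exp (-11 * ε i.1 + (-D * ε o.1 + -ε o.1)) *
        evidence lam (θ + w) (columnSpace (X o.1 o.2)) := by
        rw [← mul_assoc, ← exp_add]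
        gcongr
    _ = exp (-11 * ε i.1) * (exp (-D * ε o.1) * exp (-ε o.1) *
        evidence lam (θ + w) (columnSpace (X o.1 o.2))) := by
        rw [exp_add, exp_add]; ring
    _ ≤ exp (-11 * ε i.1) * modelMass X ε D lam (θ + w) o := by
        unfold modelMass
        gcongr
        exact (mul_le_mul_of_nonneg_left hinv (exp_pos _).le).trans
          (exp_mul_inv_card_le_priorWeight ho)

theorem natCast_le_one_of_le_exp {n : ℕ} {x : ℝ} (hn : (n : ℝ) ≤ exp x) (hx : x < 1 / 2) :
    n ≤ 1 := by
  have hexp : exp x < 2 := by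
    rw [← lt_log_iff_exp_lt two_pos]
    linarith [log_two_gt_d9]
  exact Nat.lt_succ_iff.1 (by exact_mod_cast hn.trans_lt hexp)

theorem modelMass_le_modelMass_of_lt_half (hlam : 0 ≤ lam) (hD : 0 ≤ D)
    (hℓ : ∀ τ, (ℓ τ : ℝ) ≤ ε τ) (hcard : ∀ τ, (Fintype.card (Zty τ) : ℝ) ≤ exp (ε τ))
    (ho : 0 < gramDet (X o.1 o.2)) (hoi : ε o.1 ≤ ε i.1) (hi : ε i.1 < 1 / 2)
    (y : EuclideanSpace ℝ (Fin N)) : modelMass X ε D lam y i ≤ modelMass X ε D lam y o := by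
  have hbot (j : Σ τ, Zty τ) (hj : ε j.1 < 1 / 2) : columnSpace (X j.1 j.2) = ⊥ := by
    have hzero : ℓ j.1 < 1 := by
      rw [← Nat.cast_lt (α := ℝ), Nat.cast_one]
      linarith [hℓ j.1]
    exact finrank_eq_zero.1 (Nat.lt_one_iff.1 ((finrank_columnSpace_le _).trans_lt
      (by rwa [Fintype.card_fin])))
  have ho' : ε o.1 < 1 / 2 := hoi.trans_lt hi
  have hone : Fintype.card (Zty o.1) = 1 :=
    (natCast_le_one_of_le_exp (hcard o.1) ho').antisymm (Fintype.card_pos_iff.2 ⟨o.2⟩)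
  have hweight := exp_mul_inv_card_le_priorWeight (D := D) (ε := ε) ho
  rw [hone, Nat.cast_one, inv_one, mul_one] at hweight
  rw [modelMass, modelMass, hbot i hi, hbot o ho']
  refine mul_le_mul_of_nonneg_right ?_ (evidence_nonneg hlam _ _)
  calc priorWeight X ε D i ≤ exp (-D * ε i.1) := priorWeight_le_exp
    _ ≤ exp (-D * ε o.1) := exp_le_exp.2 (mul_le_mul_of_nonpos_left hoi (by linarith))
    _ ≤ priorWeight X ε D o := hweight

theorem CountingCondition.card_le_one_of_lt_half [Fintype T] (hcount : CountingCondition ε)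
    (hcard : ∀ τ, (Fintype.card (Zty τ) : ℝ) ≤ exp (ε τ)) {s : Finset (Σ τ, Zty τ)}
    (hs : ∀ i ∈ s, 0 < ε i.1 ∧ ε i.1 < 1 / 2) : s.card ≤ 1 := by
  refine Finset.card_le_one.2 fun i hi j hj => ?_
  have hmem : ∀ k ∈ s, k.1 ∈ Finset.univ.filter
      fun τ => ((1 : ℕ) : ℝ) - 1 < ε τ ∧ ε τ ≤ ((1 : ℕ) : ℝ) := fun k hk => by
    obtain ⟨hpos, hlt⟩ := hs k hk
    simp only [Finset.mem_filter, Finset.mem_univ, true_and, Nat.cast_one]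
    exact ⟨by linarith, by linarith⟩
  have hτ := Finset.card_le_one.1 (hcount 1 one_pos) _ (hmem i hi) _ (hmem j hj)
  obtain ⟨τ, Z⟩ := i
  obtain ⟨τ', Z'⟩ := j
  obtain rfl : τ = τ' := hτ
  have hZ := natCast_le_one_of_le_exp (hcard τ) (hs _ hi).2
  rw [Fintype.card_le_one_iff.1 hZ Z Z']

theorem sum_le_half_mul_sum_of_card_le_one {ι : Type*} [Fintype ι] {m : ι → ℝ} {o : ι}
    (hm : ∀ i, 0 ≤ m i) {s : Finset ι} (hs : s.card ≤ 1) (ho : o ∉ s) (hle : ∀ i ∈ s, m i ≤ m o) :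
    ∑ i ∈ s, m i ≤ 1 / 2 * ∑ i, m i := by
  have hsum : ∑ i ∈ s, m i ≤ m o := by
    calc ∑ i ∈ s, m i ≤ s.card • m o := Finset.sum_le_card_nsmul s m (m o) hle
      _ ≤ 1 • m o := nsmul_le_nsmul_left (hm o) hs
      _ = m o := one_nsmul _
  have hinsert : m o + ∑ i ∈ s, m i ≤ ∑ i, m i := by
    rw [← Finset.sum_insert ho]
    exact Finset.sum_le_univ_sum_of_nonneg hm
  linarith

variable [Fintype T]

theorem sum_modelMass_le_of_half_le (hlam : 0 < lam) (hρ : 0 < ρ) (hδ : 0 < δ)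
    (hD : complexityThreshold lam ρ δ < D) (hℓ : ∀ τ, (ℓ τ : ℝ) ≤ ε τ)
    (hcard : ∀ τ, (Fintype.card (Zty τ) : ℝ) ≤ exp (ε τ)) (hcount : CountingCondition ε)
    (ho : 0 < gramDet (X o.1 o.2)) (hv : v ∈ columnSpace (X o.1 o.2))
    {s : Finset (Σ τ, Zty τ)}
    (hs : ∀ i ∈ s, 1 / 2 ≤ ε i.1 ∧ (1 + δ) * ε o.1 + δ * ‖v - θ‖ ^ 2 < ε i.1)
    (hw : ∀ i ∈ s, ∀ u ∈ columnSpace (X i.1 i.2) ⊔ span ℝ {v},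
      ⟪w, u⟫_ℝ ≤ √(136 / ρ * ε i.1) * ‖u‖) :
    ∑ i ∈ s, modelMass X ε D lam (θ + w) i ≤
      exp (-(δ * (ε o.1 + ‖v - θ‖ ^ 2))) / 8 * ∑ i, modelMass X ε D lam (θ + w) i := by
  have hεo : 0 ≤ ε o.1 := (Nat.cast_nonneg _).trans (hℓ o.1)
  have hmass (i : Σ τ, Zty τ) : 0 ≤ modelMass X ε D lam (θ + w) i :=
    modelMass_nonneg hlam.le _
  calc ∑ i ∈ s, modelMass X ε D lam (θ + w) i
      ≤ ∑ i ∈ s, exp (-11 * ε i.1) * modelMass X ε D lam (θ + w) o :=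
        Finset.sum_le_sum fun i hi => modelMass_le_exp_mul_modelMass hlam hρ hδ hD hℓ hcard ho hv
          (hs i hi).1 (hs i hi).2 fun x hx => hw i hi _ <|
            sub_mem (mem_sup_left hx) (mem_sup_right (mem_span_singleton_self v))
    _ = (∑ i ∈ s, exp (-11 * ε i.1)) * modelMass X ε D lam (θ + w) o := by rw [Finset.sum_mul]
    _ ≤ exp (-(δ * (ε o.1 + ‖v - θ‖ ^ 2))) / 8 * ∑ i, modelMass X ε D lam (θ + w) i := by
        gcongr
        · exact hmass o
        · exact hcount.sum_sigma_exp_neg_le hcard fun i hi =>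
            ⟨(hs i hi).1, by linarith [(hs i hi).2]⟩
        · exact Finset.single_le_sum (fun i _ => hmass i) (Finset.mem_univ o)

theorem sum_modelMass_le_of_lt_half (hlam : 0 ≤ lam) (hD : 0 ≤ D) (hδ : 0 < δ) {b : ℝ}
    (hb : 0 ≤ b) (hℓ : ∀ τ, (ℓ τ : ℝ) ≤ ε τ)
    (hcard : ∀ τ, (Fintype.card (Zty τ) : ℝ) ≤ exp (ε τ)) (hcount : CountingCondition ε)
    (ho : 0 < gramDet (X o.1 o.2)) {s : Finset (Σ τ, Zty τ)}
    (hs : ∀ i ∈ s, ε i.1 < 1 / 2 ∧ (1 + δ) * ε o.1 + δ * b < ε i.1)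
    (y : EuclideanSpace ℝ (Fin N)) :
    ∑ i ∈ s, modelMass X ε D lam y i ≤
      2 / 3 * exp (-(δ / 2 * (ε o.1 + b))) * ∑ i, modelMass X ε D lam y i := by
  have hεo : 0 ≤ ε o.1 := (Nat.cast_nonneg _).trans (hℓ o.1)
  have hmass (i : Σ τ, Zty τ) : 0 ≤ modelMass X ε D lam y i := modelMass_nonneg hlam y
  have hoi : ∀ i ∈ s, ε o.1 < ε i.1 := fun i hi => by
    nlinarith [(hs i hi).2, mul_nonneg hδ.le hεo, mul_nonneg hδ.le hb]
  rcases s.eq_empty_or_nonempty with rfl | ⟨i, hi⟩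
  · rw [Finset.sum_empty]
    exact mul_nonneg (by positivity) (Finset.sum_nonneg fun i _ => hmass i)
  calc ∑ i ∈ s, modelMass X ε D lam y i ≤ 1 / 2 * ∑ i, modelMass X ε D lam y i :=
        sum_le_half_mul_sum_of_card_le_one hmass
          (hcount.card_le_one_of_lt_half hcard fun i hi =>
            ⟨hεo.trans_lt (hoi i hi), (hs i hi).1⟩)
          (fun hos => lt_irrefl _ (hoi o hos)) fun i hi =>
            modelMass_le_modelMass_of_lt_half hlam hD hℓ hcard ho (hoi i hi).le (hs i hi).1 y
    _ ≤ 2 / 3 * exp (-(δ / 2 * (ε o.1 + b))) * ∑ i, modelMass X ε D lam y i := by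
        gcongr
        · exact Finset.sum_nonneg fun i _ => hmass i
        · linarith [add_one_le_exp (-(δ / 2 * (ε o.1 + b))), (hs i hi).1, (hs i hi).2]

theorem framePost_le_of_noise_bound (hlam : 0 < lam) (hρ : 0 < ρ) (hδ : 0 < δ)
    (hD : complexityThreshold lam ρ δ < D) (hℓ : ∀ τ, (ℓ τ : ℝ) ≤ ε τ)
    (hcard : ∀ τ, (Fintype.card (Zty τ) : ℝ) ≤ exp (ε τ)) (hcount : CountingCondition ε)
    (ho : 0 < gramDet (X o.1 o.2)) (hv : v ∈ columnSpace (X o.1 o.2)) {Y : Fin N → ℝ}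
    (hY : WithLp.toLp 2 Y = θ + w)
    (hw : ∀ i : Σ τ, Zty τ, 1 / 2 ≤ ε i.1 → (1 + δ) * ε o.1 + δ * ‖v - θ‖ ^ 2 < ε i.1 →
      ∀ u ∈ columnSpace (X i.1 i.2) ⊔ span ℝ {v}, ⟪w, u⟫_ℝ ≤ √(136 / ρ * ε i.1) * ‖u‖) :
    framePost N ℓ X ε D lam Y {τ | (1 + δ) * ε o.1 + δ * ‖v - θ‖ ^ 2 < ε τ} Set.univ ≤
      7 / 8 * exp (-(δ / 2 * (ε o.1 + ‖v - θ‖ ^ 2))) := by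
  have hεo : 0 ≤ ε o.1 := (Nat.cast_nonneg _).trans (hℓ o.1)
  set s : Finset (Σ τ, Zty τ) :=
    Finset.univ.filter fun i => i.1 ∈ {τ | (1 + δ) * ε o.1 + δ * ‖v - θ‖ ^ 2 < ε τ}
  have hs : ∀ i ∈ s, (1 + δ) * ε o.1 + δ * ‖v - θ‖ ^ 2 < ε i.1 := fun i hi =>
    (Finset.mem_filter.1 hi).2
  have hlarge := sum_modelMass_le_of_half_le hlam hρ hδ hD hℓ hcard hcount ho hv
    (s := s.filter fun i => 1 / 2 ≤ ε i.1)
    (fun i hi => ⟨(Finset.mem_filter.1 hi).2, hs i (Finset.mem_filter.1 hi).1⟩)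
    fun i hi => hw i (Finset.mem_filter.1 hi).2 (hs i (Finset.mem_filter.1 hi).1)
  have hsmall := sum_modelMass_le_of_lt_half hlam.le
    ((complexityThreshold_pos hlam hρ hδ).trans hD).le hδ (sq_nonneg ‖v - θ‖) hℓ hcard hcount ho
    (s := s.filter fun i => ¬ 1 / 2 ≤ ε i.1)
    (fun i hi => ⟨not_le.1 (Finset.mem_filter.1 hi).2, hs i (Finset.mem_filter.1 hi).1⟩) (θ + w)
  have htotal : 0 ≤ ∑ i, modelMass X ε D lam (θ + w) i :=
    Finset.sum_nonneg fun i _ => modelMass_nonneg hlam.le _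
  have hexp : exp (-(δ * (ε o.1 + ‖v - θ‖ ^ 2))) ≤ exp (-(δ / 2 * (ε o.1 + ‖v - θ‖ ^ 2))) := by
    gcongr
    linarith
  rw [framePost_univ_eq, hY]
  refine div_le_of_le_mul₀ htotal (by positivity) ?_
  rw [← Finset.sum_filter_add_sum_filter_not s fun i => 1 / 2 ≤ ε i.1]
  refine (add_le_add hlarge hsmall).trans ?_
  rw [← add_mul]
  gcongr
  linarith [exp_pos (-(δ / 2 * (ε o.1 + ‖v - θ‖ ^ 2)))]

theorem framePost_nonneg (hlam : 0 ≤ lam) (Y : Fin N → ℝ) (A : Set T) :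
    0 ≤ framePost N ℓ X ε D lam Y A Set.univ := by
  rw [framePost_univ_eq]
  exact div_nonneg (Finset.sum_nonneg fun i _ => modelMass_nonneg hlam _)
    (Finset.sum_nonneg fun i _ => modelMass_nonneg hlam _)

theorem framePost_le_one (hlam : 0 ≤ lam) (Y : Fin N → ℝ) (A : Set T) :
    framePost N ℓ X ε D lam Y A Set.univ ≤ 1 := by
  rw [framePost_univ_eq]
  exact div_le_one_of_le₀
    (Finset.sum_le_univ_sum_of_nonneg fun i => modelMass_nonneg hlam _)
    (Finset.sum_nonneg fun i _ => modelMass_nonneg hlam _)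

variable {Ω : Type*} [MeasurableSpace Ω] {P : Measure Ω} {W : Ω → Fin N → ℝ}

theorem subG_measureReal_exists_lt_inner_le (hW : subG P ρ W) (hρ : 0 < ρ)
    (hℓ : ∀ τ, (ℓ τ : ℝ) ≤ ε τ) (hcard : ∀ τ, (Fintype.card (Zty τ) : ℝ) ≤ exp (ε τ))
    (hcount : CountingCondition ε) (v : EuclideanSpace ℝ (Fin N)) {s : Finset (Σ τ, Zty τ)} {x : ℝ}
    (hs : ∀ i ∈ s, 1 / 2 ≤ ε i.1 ∧ x ≤ ε i.1) :
    P.real {ω | ∃ i ∈ s, ∃ u ∈ columnSpace (X i.1 i.2) ⊔ span ℝ {v},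
      √(136 / ρ * ε i.1) * ‖u‖ < ⟪WithLp.toLp 2 (W ω), u⟫_ℝ} ≤ exp (-x) / 8 := by
  refine ENNReal.toReal_le_of_le_ofReal (by positivity) ?_
  calc _ = P (⋃ i ∈ s, {ω | ∃ u ∈ columnSpace (X i.1 i.2) ⊔ span ℝ {v},
        √(136 / ρ * ε i.1) * ‖u‖ < ⟪WithLp.toLp 2 (W ω), u⟫_ℝ}) := by
        congr 1
        ext ω
        simp
    _ ≤ ∑ i ∈ s, ENNReal.ofReal (exp (-11 * ε i.1)) :=
        (measure_biUnion_finset_le _ _).trans <| Finset.sum_le_sum fun i hi =>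
          subG_measure_exists_mem_columnSpace_sup_lt_inner_le hW hρ (X i.1 i.2)
            ((Fintype.card_fin (ℓ i.1)).symm ▸ hℓ i.1) (hs i hi).1 v
    _ = ENNReal.ofReal (∑ i ∈ s, exp (-11 * ε i.1)) :=
        (ENNReal.ofReal_sum_of_nonneg fun _ _ => (exp_pos _).le).symm
    _ ≤ ENNReal.ofReal (exp (-x) / 8) :=
        ENNReal.ofReal_le_ofReal (hcount.sum_sigma_exp_neg_le hcard hs)

end Posterior

theorem main_theorem_complexity_general {lam ρ δ D : ℝ} (hlam : 0 < lam) (hρ : 0 < ρ)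
    (hδ : 0 < δ) (hD : complexityThreshold lam ρ δ < D) {N : ℕ} {T : Type*} [Fintype T]
    {Zty : T → Type*} [∀ τ, Fintype (Zty τ)] {ℓ : T → ℕ}
    {X : (τ : T) → Zty τ → Matrix (Fin N) (Fin (ℓ τ)) ℝ} {ε : T → ℝ}
    (hℓ : ∀ τ, (ℓ τ : ℝ) ≤ ε τ) (hcard : ∀ τ, (Fintype.card (Zty τ) : ℝ) ≤ exp (ε τ))
    (hcount : CountingCondition ε) (θs : Fin N → ℝ) {τs : T} {Zs : Zty τs}
    (hgram : 0 < gramDet (X τs Zs)) (Qs : Fin (ℓ τs) → ℝ) {Ω : Type*} [MeasurableSpace Ω]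
    {P : Measure Ω} [IsProbabilityMeasure P] {W : Ω → Fin N → ℝ} (hW : subG P ρ W) :
    ∫ ω, framePost N ℓ X ε D lam (fun i => θs i + W ω i)
        {τ | (1 + δ) * ε τs + δ * (enr fun i => (X τs Zs *ᵥ Qs) i - θs i) ^ 2 < ε τ} Set.univ ∂P ≤
      exp (-(δ / 2) * (ε τs + (enr fun i => (X τs Zs *ᵥ Qs) i - θs i) ^ 2)) := by
  set θ : EuclideanSpace ℝ (Fin N) := WithLp.toLp 2 θs
  set v : EuclideanSpace ℝ (Fin N) := WithLp.toLp 2 (X τs Zs *ᵥ Qs)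
  have hbias : (enr fun i => (X τs Zs *ᵥ Qs) i - θs i) = ‖v - θ‖ := enr_eq_norm _
  rw [hbias, neg_mul]
  have hετs : 0 ≤ ε τs := (Nat.cast_nonneg _).trans (hℓ τs)
  have hbad := subG_measureReal_exists_lt_inner_le (X := X) hW hρ hℓ hcard hcount v
    (s := Finset.univ.filter fun i => 1 / 2 ≤ ε i.1 ∧ (1 + δ) * ε τs + δ * ‖v - θ‖ ^ 2 < ε i.1)
    (x := δ / 2 * (ε τs + ‖v - θ‖ ^ 2)) fun i hi => by
      obtain ⟨-, hhalf, hgap⟩ := Finset.mem_filter.1 hi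
      exact ⟨hhalf, by nlinarith [mul_nonneg hδ.le hετs, mul_nonneg hδ.le (sq_nonneg ‖v - θ‖)]⟩
  refine (integral_le_add_measureReal_of_le_of_notMem (fun ω => framePost_nonneg hlam.le _ _)
    (fun ω => framePost_le_one hlam.le _ _) (by positivity) fun ω hω =>
      framePost_le_of_noise_bound (o := ⟨τs, Zs⟩) (w := WithLp.toLp 2 (W ω)) hlam hρ hδ hD hℓ
        hcard hcount hgram (toLp_mulVec_mem_columnSpace _ _) rfl fun i hhalf hgap u hu => ?_).trans
    ((add_le_add_right hbad _).trans_eq (by ring))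
  by_contra! hlt
  exact hω ⟨i, Finset.mem_filter.2 ⟨Finset.mem_univ i, hhalf, hgap⟩, u, hu, hlt⟩

/-- Theorem 1, first assertion (2.5): the model complexity selected by the posterior
distribution is bounded by the complexity of the oracle plus the model misspecification
term, with exponentially small exceptional posterior mass in expectation. -/
theorem main_theorem_complexity :
    ∀ lam ρ : ℝ, 0 < lam → 0 < ρ →
    ∃ δ₀ : ℝ, 0 < δ₀ ∧ δ₀ ≤ 1 ∧ ∀ δ : ℝ, 0 < δ → δ < δ₀ →
    ∃ D₀ : ℝ, 0 < D₀ ∧ ∀ D : ℝ, D₀ < D →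
    ∃ C' : ℝ, 0 < C' ∧
    ∀ (N : ℕ) (T : Type) [Fintype T] (Zty : T → Type) [∀ τ, Fintype (Zty τ)]
      [∀ τ, Nonempty (Zty τ)]
      (ℓ : T → ℕ) (X : (τ : T) → Zty τ → Matrix (Fin N) (Fin (ℓ τ)) ℝ) (ε : T → ℝ),
      (∀ τ, (ℓ τ : ℝ) + Real.log (Fintype.card (Zty τ)) ≤ ε τ) →
      (∀ t : ℕ, 0 < t →
        (Finset.univ.filter fun τ => (t : ℝ) - 1 < ε τ ∧ ε τ ≤ (t : ℝ)).card ≤ t) →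
      ∀ (θs : Fin N → ℝ) (τs : T) (Zs : Zty τs), 0 < gramDet (X τs Zs) →
      ∀ (Qs : Fin (ℓ τs) → ℝ)
        (Ω : Type) (_ : MeasurableSpace Ω) (P : Measure Ω) (_ : IsProbabilityMeasure P)
        (W : Ω → Fin N → ℝ), subG P ρ W →
      ∫ ω, framePost N ℓ X ε D lam (fun i => θs i + W ω i)
          {τ | (1 + δ) * ε τs
              + δ * (enr fun i => (X τs Zs).mulVec Qs i - θs i) ^ 2 < ε τ}
          Set.univ ∂P
        ≤ Real.exp (-C' * (ε τs + (enr fun i => (X τs Zs).mulVec Qs i - θs i) ^ 2)) := by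
  intro lam ρ hlam hρ
  refine ⟨1, one_pos, le_rfl, fun δ hδ _ => ⟨complexityThreshold lam ρ δ,
    complexityThreshold_pos hlam hρ hδ, fun D hD => ⟨δ / 2, half_pos hδ, ?_⟩⟩⟩
  intro N T _ Zty _ _ ℓ X ε hε hcount θs τs Zs hgram Qs Ω _ P _ W hW
  have hℓ (τ : T) : (ℓ τ : ℝ) ≤ ε τ :=
    (le_add_of_nonneg_right (log_natCast_nonneg _)).trans (hε τ)
  have hcard (τ : T) : (Fintype.card (Zty τ) : ℝ) ≤ exp (ε τ) :=
    (log_le_iff_le_exp (Nat.cast_pos.2 Fintype.card_pos)).1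
      ((le_add_of_nonneg_left (Nat.cast_nonneg _)).trans (hε τ))
  exact main_theorem_complexity_general hlam hρ hδ hD hℓ hcard hcount θs hgram Qs hW
end
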